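/- Let d ≥ 2, 0 < s ≤ 1, 1 ≤ p, q < ∞, 0 < α < d, and assume 𝒟 = p(d+α) − 2q(d−sp) < 0. Then there exists a constant C > 0 such that for all ε > 0 small enough with p(d+α+2ε) − 2q(d−sp) < 0, setting γ_ε = q + (q(sp−1)+p)(d−α−2ε)/(sp(d+α+2ε−2) + (d−α−2ε)) and a_ε = p(γ_ε(d+α+2ε) − 2qd)/(γ_ε(p(d+α+2ε) − 2q(d−sp))), for every radial g ∈ C¹_{c,rad}(ℝ^d): ‖g‖_{L^{γ_ε}(ℝ^d)} ≤ C ‖g‖_{Ẇ^{s,p}(ℝ^d)}^{a_ε} ‖ |x|^{−((d−α)/(2q) − ε/q)} g ‖_{L^q(ℝ^d)}^{1−a_ε}. -/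

import Mathlib

open MeasureTheory Real

/-- Homogeneous (fractional) Sobolev seminorm `‖g‖_{Ẇ^{s,p}(ℝ^d)}`:
for `0 < s < 1` the Gagliardo seminorm, for `s = 1` the `L^p` norm of the gradient. -/
noncomputable def sobolevSemi (d : ℕ) (s p : ℝ) (g : EuclideanSpace ℝ (Fin d) → ℝ) : ℝ :=
  if s = 1 then (∫ x, ‖fderiv ℝ g x‖ ^ p) ^ (1 / p)
  else if s = 0 then (∫ x, |g x| ^ p) ^ (1 / p)
  else (∫ x, ∫ y, |g x - g y| ^ p / ‖x - y‖ ^ ((d : ℝ) + s * p)) ^ (1 / p)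

lemma volume_ball_eq {d : ℕ} (x : EuclideanSpace ℝ (Fin d)) {r : ℝ} (hr : 0 < r) :
    volume (Metric.ball x r) =
      ENNReal.ofReal (r ^ d) * volume (Metric.ball (0 : EuclideanSpace ℝ (Fin d)) 1) := by
  rw [Measure.addHaar_ball_of_pos volume x hr, finrank_euclideanSpace_fin]

lemma volume_unitBall_pos (d : ℕ) :
    0 < volume (Metric.ball (0 : EuclideanSpace ℝ (Fin d)) 1) :=
  Metric.measure_ball_pos _ _ one_pos

lemma setLIntegral_ball_eq_of_norm_eq {d : ℕ} {u : EuclideanSpace ℝ (Fin d) → ENNReal}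
    (hu : ∀ x y, ‖x‖ = ‖y‖ → u x = u y) {x x' : EuclideanSpace ℝ (Fin d)} (h : ‖x‖ = ‖x'‖)
    (r : ℝ) : ∫⁻ y in Metric.ball x r, u y = ∫⁻ y in Metric.ball x' r, u y := by
  set R := Submodule.reflection (ℝ ∙ (x - x'))ᗮ with hR
  have hx : R x = x' := Submodule.reflection_sub h
  have h1 := R.measurePreserving.setLIntegral_comp_preimage_emb
    R.toHomeomorph.measurableEmbedding u (Metric.ball x' r)
  rw [← h1, ← hx, R.preimage_ball, R.symm_apply_apply]
  exact setLIntegral_congr_fun measurableSet_ball fun y _ => hu _ _ (R.norm_map y).symm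

lemma volume_shell_ge {d : ℕ} (hd : 1 ≤ d) {ρ r : ℝ} (hρ : 0 < ρ) (hr : 0 < r) :
    ENNReal.ofReal (r * ρ ^ (d - 1)) * volume (Metric.ball (0 : EuclideanSpace ℝ (Fin d)) 1) ≤
      volume (Metric.ball (0 : EuclideanSpace ℝ (Fin d)) (ρ + r) \ Metric.ball 0 ρ) := by
  rw [measure_sdiff (Metric.ball_subset_ball (by linarith)) measurableSet_ball.nullMeasurableSet
    measure_ball_lt_top.ne, volume_ball_eq 0 hρ, volume_ball_eq 0 (add_pos hρ hr),
    ← ENNReal.sub_mul (fun _ _ => measure_ball_lt_top.ne), ← ENNReal.ofReal_sub _ (by positivity)]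
  gcongr
  obtain ⟨n, rfl⟩ : ∃ n, d = n + 1 := ⟨d - 1, by omega⟩
  have : ρ ^ n ≤ (ρ + r) ^ n := by gcongr; linarith
  simp only [Nat.add_sub_cancel, pow_succ]
  nlinarith

/-- Averages of a radial function over small balls are controlled by averages over shells. -/
lemma setLIntegral_ball_le_shell {d : ℕ} (hd : 1 ≤ d) {u : EuclideanSpace ℝ (Fin d) → ENNReal}
    (hum : Measurable u) (hu : ∀ x y, ‖x‖ = ‖y‖ → u x = u y) {x : EuclideanSpace ℝ (Fin d)}
    {r : ℝ} (hr : 0 < r) (hrx : 6 * r ≤ ‖x‖) :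
    ENNReal.ofReal (r * ‖x‖ ^ (d - 1)) * ∫⁻ y in Metric.ball x r, u y ≤
      ENNReal.ofReal ((2 * r) ^ d) *
        ∫⁻ y in {y | ‖x‖ / 2 ≤ ‖y‖ ∧ ‖y‖ ≤ 2 * ‖x‖}, u y := by
  have hx : 0 < ‖x‖ := by linarith
  set S := Metric.ball (0 : EuclideanSpace ℝ (Fin d)) (‖x‖ + r) \ Metric.ball 0 ‖x‖ with hS
  set T := {y : EuclideanSpace ℝ (Fin d) | ‖x‖ / 2 ≤ ‖y‖ ∧ ‖y‖ ≤ 2 * ‖x‖} with hT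
  have hSm : MeasurableSet S := measurableSet_ball.diff measurableSet_ball
  have hTm : MeasurableSet T :=
    (measurableSet_le measurable_const measurable_norm).inter
      (measurableSet_le measurable_norm measurable_const)
  have hω0 := (volume_unitBall_pos d).ne'
  have hωt : volume (Metric.ball (0 : EuclideanSpace ℝ (Fin d)) 1) ≠ ⊤ := measure_ball_lt_top.ne
  set ω := volume (Metric.ball (0 : EuclideanSpace ℝ (Fin d)) 1)
  have key : ∀ z ∈ S, ∫⁻ y in Metric.ball x r, u y ≤ ∫⁻ y in Metric.ball z (2 * r), u y := by
    intro z hz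
    have hz1 : ‖z‖ < ‖x‖ + r := by simpa using hz.1
    have hz2 : ‖x‖ ≤ ‖z‖ := by simpa using hz.2
    set w := (‖z‖ / ‖x‖) • x with hw
    have hwn : ‖w‖ = ‖z‖ := by
      rw [hw, norm_smul, Real.norm_of_nonneg (by positivity)]; field_simp
    rw [← setLIntegral_ball_eq_of_norm_eq hu hwn (2 * r)]
    apply lintegral_mono_set
    apply Metric.ball_subset_ball'
    have : dist x w = ‖z‖ - ‖x‖ := by
      have h2 : w - x = (‖z‖ / ‖x‖ - 1) • x := by rw [hw, sub_smul, one_smul]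
      rw [dist_comm, dist_eq_norm, h2, norm_smul, Real.norm_of_nonneg]
      · field_simp
      · rw [sub_nonneg, le_div_iff₀ hx]; linarith
    rw [this]; linarith
  have hkm : Measurable (Function.uncurry fun z y : EuclideanSpace ℝ (Fin d) =>
      (Metric.ball z (2 * r)).indicator u y) := by
    have : (Function.uncurry fun z y : EuclideanSpace ℝ (Fin d) =>
      (Metric.ball z (2 * r)).indicator u y) =
      Set.indicator {p : EuclideanSpace ℝ (Fin d) × EuclideanSpace ℝ (Fin d) |
        dist p.2 p.1 < 2 * r} (fun p => u p.2) := by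
      ext p; simp [Function.uncurry, Set.indicator]
    rw [this]
    exact (hum.comp measurable_snd).indicator
      (measurableSet_lt (measurable_snd.dist measurable_fst) measurable_const)
  have main : ω * (ENNReal.ofReal (r * ‖x‖ ^ (d - 1)) * ∫⁻ y in Metric.ball x r, u y) ≤
      ω * (ENNReal.ofReal ((2 * r) ^ d) * ∫⁻ y in T, u y) := by
    calc _ = (ENNReal.ofReal (r * ‖x‖ ^ (d - 1)) * ω) * ∫⁻ y in Metric.ball x r, u y := by ring
      _ ≤ volume S * ∫⁻ y in Metric.ball x r, u y := by
        gcongr; exact volume_shell_ge hd hx hr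
      _ = ∫⁻ _ in S, ∫⁻ y in Metric.ball x r, u y := by rw [setLIntegral_const, mul_comm]
      _ ≤ ∫⁻ z in S, ∫⁻ y in Metric.ball z (2 * r), u y := setLIntegral_mono' hSm key
      _ = ∫⁻ z in S, ∫⁻ y, (Metric.ball z (2 * r)).indicator u y := by
        simp_rw [lintegral_indicator measurableSet_ball]
      _ = ∫⁻ y, ∫⁻ z in S, (Metric.ball z (2 * r)).indicator u y :=
        lintegral_lintegral_swap hkm.aemeasurable
      _ ≤ ∫⁻ y, T.indicator (fun y => ENNReal.ofReal ((2 * r) ^ d) * ω * u y) y := by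
        apply lintegral_mono
        intro y
        by_cases hy : y ∈ T
        · rw [Set.indicator_of_mem hy, ← volume_ball_eq y (by positivity), mul_comm (volume _),
            ← setLIntegral_const, ← lintegral_indicator measurableSet_ball]
          refine (setLIntegral_le_lintegral _ _).trans (lintegral_mono fun z => ?_)
          simp [Set.indicator, dist_comm]
        · rw [Set.indicator_of_notMem hy, nonpos_iff_eq_zero]
          refine (setLIntegral_congr_fun hSm fun z hz => ?_).trans lintegral_zero
          refine Set.indicator_of_notMem (fun hyz => hy ?_) _
          have hz1 : ‖z‖ < ‖x‖ + r := by simpa using hz.1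
          have hz2 : ‖x‖ ≤ ‖z‖ := by simpa using hz.2
          have hyz' : ‖y - z‖ < 2 * r := by simpa [dist_eq_norm] using hyz
          have h1 := norm_sub_norm_le y z
          have h2 := norm_sub_norm_le z y
          rw [norm_sub_rev z y] at h2
          constructor <;> linarith
      _ = _ := by
        rw [lintegral_indicator hTm, lintegral_const_mul _ hum]; ring
  exact (ENNReal.mul_le_mul_iff_right hω0 hωt).1 main

lemma add_rpow_le_two_rpow_mul {a b p : ℝ} (ha : 0 ≤ a) (hb : 0 ≤ b) (hp : 0 ≤ p) :
    (a + b) ^ p ≤ 2 ^ p * (a ^ p + b ^ p) := by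
  wlog h : b ≤ a generalizing a b
  · rw [add_comm a b, add_comm (a ^ p)]; exact this hb ha (le_of_not_ge h)
  calc (a + b) ^ p ≤ (2 * a) ^ p := by gcongr; linarith
    _ = 2 ^ p * a ^ p := Real.mul_rpow (by norm_num) ha
    _ ≤ _ := by gcongr; linarith [Real.rpow_nonneg hb p]

lemma rpow_neg_le_mul_rpow_neg {a b c e : ℝ} (ha : 0 < a) (hb : 0 < b) (hc : 0 < c)
    (he : 0 ≤ e) (h : b ≤ c * a) : a ^ (-e) ≤ c ^ e * b ^ (-e) := by
  rw [Real.rpow_neg ha.le, Real.rpow_neg hb.le, ← div_eq_mul_inv, inv_eq_one_div,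
    div_le_div_iff₀ (by positivity) (by positivity), one_mul, ← Real.mul_rpow hc.le ha.le]
  gcongr

lemma hardy_pointwise {d : ℕ} {s p R : ℝ} (hs : 0 < s) (hp : 1 ≤ p) (hR : 2 ≤ R)
    (g : EuclideanSpace ℝ (Fin d) → ℝ) {x y : EuclideanSpace ℝ (Fin d)} (hx : x ≠ 0)
    (hy : y ∈ Metric.ball ((2 * R) • x) (R * ‖x‖)) :
    |g x| ^ p * ‖x‖ ^ (-((d : ℝ) + s * p)) ≤
      2 ^ p * (3 * R) ^ ((d : ℝ) + s * p) * (|g y| ^ p * ‖y‖ ^ (-((d : ℝ) + s * p))) +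
      2 ^ p * (3 * R + 1) ^ ((d : ℝ) + s * p) *
        (|g x - g y| ^ p / ‖x - y‖ ^ ((d : ℝ) + s * p)) := by
  have hx0 : 0 < ‖x‖ := norm_pos_iff.2 hx
  have he : 0 ≤ (d : ℝ) + s * p := by positivity
  set e := (d : ℝ) + s * p
  have hn : ‖(2 * R) • x‖ = 2 * R * ‖x‖ := by
    rw [norm_smul, Real.norm_of_nonneg (by positivity)]
  have hy' : ‖y - (2 * R) • x‖ < R * ‖x‖ := by simpa [dist_eq_norm] using hy
  have h1 := norm_sub_norm_le y ((2 * R) • x)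
  have h2 := norm_sub_norm_le ((2 * R) • x) y
  rw [norm_sub_rev _ y] at h2
  have hRx : 2 * ‖x‖ ≤ R * ‖x‖ := by gcongr
  have hy1 : ‖y‖ ≤ 3 * R * ‖x‖ := by linarith
  have hy2 : R * ‖x‖ < ‖y‖ := by linarith
  have hxy1 : ‖x - y‖ ≤ (3 * R + 1) * ‖x‖ := by linarith [norm_sub_le x y]
  have hxy2 : 0 < ‖x - y‖ := by
    have := norm_sub_norm_le y x
    rw [norm_sub_rev] at this
    linarith
  have hg : |g x| ^ p ≤ 2 ^ p * (|g x - g y| ^ p + |g y| ^ p) := by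
    refine le_trans ?_ (add_rpow_le_two_rpow_mul (abs_nonneg _) (abs_nonneg _) (by linarith))
    gcongr
    simpa using abs_add_le (g x - g y) (g y)
  have k1 := rpow_neg_le_mul_rpow_neg hx0 (by linarith) (by positivity) he hy1
  have k2 := rpow_neg_le_mul_rpow_neg hx0 hxy2 (by positivity) he hxy1
  rw [div_eq_mul_inv, ← Real.rpow_neg hxy2.le]
  calc |g x| ^ p * ‖x‖ ^ (-e)
      ≤ 2 ^ p * (|g x - g y| ^ p + |g y| ^ p) * ‖x‖ ^ (-e) := by gcongr
    _ = 2 ^ p * |g y| ^ p * ‖x‖ ^ (-e) + 2 ^ p * |g x - g y| ^ p * ‖x‖ ^ (-e) := by ring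
    _ ≤ 2 ^ p * |g y| ^ p * ((3 * R) ^ e * ‖y‖ ^ (-e)) +
        2 ^ p * |g x - g y| ^ p * ((3 * R + 1) ^ e * ‖x - y‖ ^ (-e)) := by gcongr
    _ = _ := by ring

lemma le_mul_of_le_half_add {H S A B : ENNReal} (hH : H ≠ ⊤) (hA : A ≠ 0) (hAt : A ≠ ⊤)
    (h : A * H ≤ A / 2 * H + B * S) : H ≤ 2 * B / A * S := by
  have h2 : A / 2 * H ≤ B * S := by
    have hf : A / 2 * H ≠ ⊤ := ENNReal.mul_ne_top (ENNReal.div_ne_top hAt (by norm_num)) hH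
    refine (ENNReal.add_le_add_iff_left hf).1 ?_
    rwa [← add_mul, ENNReal.add_halves]
  have h3 : A * H ≤ 2 * B * S := by
    calc A * H = 2 * (A / 2 * H) := by
          rw [← mul_assoc, ENNReal.mul_div_cancel (by norm_num) (by norm_num)]
      _ ≤ 2 * (B * S) := by gcongr
      _ = _ := by ring
  calc H = (A * H) / A := by rw [mul_comm A H, ENNReal.mul_div_cancel_right hA hAt]
    _ ≤ 2 * B * S / A := by gcongr
    _ = _ := by simp only [div_eq_mul_inv]; ring

/-- Fractional Hardy inequality. -/
lemma lintegral_hardy_le {d : ℕ} (hd : 1 ≤ d) {s p : ℝ} (hs : 0 < s) (hp : 1 ≤ p)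
    (hsp : s * p < d) : ∃ C : ℝ, 0 < C ∧ ∀ g : EuclideanSpace ℝ (Fin d) → ℝ, Continuous g →
      ∫⁻ x, ENNReal.ofReal (|g x| ^ p * ‖x‖ ^ (-(s * p))) ≠ ⊤ →
      ∫⁻ x, ENNReal.ofReal (|g x| ^ p * ‖x‖ ^ (-(s * p))) ≤ ENNReal.ofReal C *
        ∫⁻ x, ∫⁻ y, ENNReal.ofReal (|g x - g y| ^ p / ‖x - y‖ ^ ((d : ℝ) + s * p)) := by
  have hd0 : (0 : ℝ) < d := by exact_mod_cast hd
  have he : 0 < (d : ℝ) + s * p := by positivity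
  have : Nonempty (Fin d) := ⟨⟨0, hd⟩⟩
  set e := (d : ℝ) + s * p with he_def
  obtain ⟨R, hR2, hR⟩ : ∃ R : ℝ, 2 ≤ R ∧ 2 ^ p * (3 * R) ^ e * R⁻¹ ^ d ≤ R ^ d / 2 := by
    have ht : Filter.Tendsto (fun R : ℝ => R ^ ((d : ℝ) - s * p)) Filter.atTop Filter.atTop :=
      tendsto_rpow_atTop (by linarith)
    obtain ⟨R, h1, h2⟩ := ((ht.eventually_ge_atTop (2 * (2 ^ p * 3 ^ e))).and
      (Filter.eventually_ge_atTop 2)).exists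
    refine ⟨R, h2, ?_⟩
    have hR0 : 0 < R := by linarith
    have e1 : R ^ e = R ^ d * R ^ (s * p) := by
      rw [he_def, Real.rpow_add hR0, Real.rpow_natCast]
    have e2 : R ^ ((d : ℝ) - s * p) * R ^ (s * p) = R ^ d := by
      rw [← Real.rpow_add hR0, sub_add_cancel, Real.rpow_natCast]
    rw [Real.mul_rpow (by norm_num) hR0.le, e1, inv_pow]
    have e3 : 2 ^ p * (3 ^ e * (R ^ d * R ^ (s * p))) * (R ^ d)⁻¹
        = 2 ^ p * 3 ^ e * R ^ (s * p) := by field_simp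
    rw [e3, ← e2]
    have := mul_le_mul_of_nonneg_right h1 (Real.rpow_nonneg hR0.le (s * p))
    linarith
  have hR0 : 0 < R := by linarith
  have hωt : volume (Metric.ball (0 : EuclideanSpace ℝ (Fin d)) 1) ≠ ⊤ := measure_ball_lt_top.ne
  have hω0 := (volume_unitBall_pos d).ne'
  set ω := volume (Metric.ball (0 : EuclideanSpace ℝ (Fin d)) 1) with hω
  set c1 := 2 ^ p * (3 * R) ^ e with hc1
  set c2 := 2 ^ p * (3 * R + 1) ^ e with hc2
  have hc1p : 0 < c1 := by positivity
  have hc2p : 0 < c2 := by positivity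
  have hωr : 0 < ω.toReal := ENNReal.toReal_pos hω0 hωt
  have hωe : ENNReal.ofReal ω.toReal = ω := ENNReal.ofReal_toReal hωt
  refine ⟨2 * c2 / (ω.toReal * R ^ d), by positivity, fun g hg hfin => ?_⟩
  set T : Set (EuclideanSpace ℝ (Fin d) × EuclideanSpace ℝ (Fin d)) :=
    {z | dist z.2 ((2 * R) • z.1) < R * ‖z.1‖} with hT
  have hTm : MeasurableSet T := by
    apply measurableSet_lt <;> fun_prop
  have hgm : Measurable g := hg.measurable
  set h : EuclideanSpace ℝ (Fin d) → ENNReal :=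
    fun x => ENNReal.ofReal (|g x| ^ p * ‖x‖ ^ (-(s * p))) with hh
  set k : EuclideanSpace ℝ (Fin d) → ENNReal :=
    fun y => ENNReal.ofReal (c1 * (|g y| ^ p * ‖y‖ ^ (-e))) with hk
  have hkm : Measurable k := by fun_prop
  have hhm : Measurable h := by fun_prop
  set K : EuclideanSpace ℝ (Fin d) → EuclideanSpace ℝ (Fin d) → ENNReal :=
    fun x y => ENNReal.ofReal (|g x - g y| ^ p / ‖x - y‖ ^ e) with hK
  have hKm : Measurable (Function.uncurry K) := by
    simp only [Function.uncurry_def, hK]; fun_prop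
  set F : EuclideanSpace ℝ (Fin d) → EuclideanSpace ℝ (Fin d) → ENNReal :=
    fun x y => T.indicator (fun z => k z.2) (x, y) with hF
  have hFm : Measurable (Function.uncurry F) := by
    exact (hkm.comp measurable_snd).indicator hTm
  have hinner : ∀ x, x ≠ 0 → ω * ENNReal.ofReal (R ^ d) * h x ≤
      ∫⁻ y, (F x y + ENNReal.ofReal c2 * K x y) := by
    intro x hx
    have hx0 : 0 < ‖x‖ := norm_pos_iff.2 hx
    have e1 : ω * ENNReal.ofReal (R ^ d) * h x =
        ∫⁻ _ in Metric.ball ((2 * R) • x) (R * ‖x‖),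
          ENNReal.ofReal (|g x| ^ p * ‖x‖ ^ (-e)) := by
      rw [setLIntegral_const, volume_ball_eq _ (by positivity), ← hω, hh]
      have : |g x| ^ p * ‖x‖ ^ (-(s * p)) * R ^ d =
          |g x| ^ p * ‖x‖ ^ (-e) * (R * ‖x‖) ^ d := by
        rw [he_def, neg_add, Real.rpow_add hx0, Real.rpow_neg hx0.le (d : ℝ), Real.rpow_natCast,
          mul_pow]
        field_simp
      rw [← mul_assoc, ← ENNReal.ofReal_mul (by positivity), ← this,
        ENNReal.ofReal_mul (by positivity)]
      ring
    rw [e1, ← lintegral_indicator measurableSet_ball]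
    refine lintegral_mono fun y => ?_
    by_cases hy : y ∈ Metric.ball ((2 * R) • x) (R * ‖x‖)
    · have hyT : (x, y) ∈ T := hy
      simp only [Set.indicator_of_mem hy, hF, Set.indicator_of_mem hyT, hk, hK]
      rw [← ENNReal.ofReal_mul (by positivity), ← ENNReal.ofReal_add (by positivity)
        (by positivity)]
      exact ENNReal.ofReal_le_ofReal (hardy_pointwise hs hp hR2 g hx hy)
    · simp [Set.indicator_of_notMem hy]
  have hF2 : ∀ y, ∫⁻ x, F x y ≤ (ω * ENNReal.ofReal (R ^ d) / 2) * h y := by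
    intro y
    rcases eq_or_ne y 0 with rfl | hy
    · have : ∀ x, F x 0 = 0 := by
        intro x
        refine Set.indicator_of_notMem ?_ _
        simp only [hT, Set.mem_ofPred_eq, not_lt, dist_zero_left, norm_smul, norm_mul,
          Real.norm_of_nonneg hR0.le, Real.norm_ofNat]
        nlinarith [norm_nonneg x, mul_nonneg hR0.le (norm_nonneg x)]
      simp [this]
    have hy0 : 0 < ‖y‖ := norm_pos_iff.2 hy
    calc ∫⁻ x, F x y ≤ ∫⁻ x, (Metric.ball (0 : EuclideanSpace ℝ (Fin d)) (R⁻¹ * ‖y‖)).indicator (fun _ => k y) x := by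
          refine lintegral_mono fun x => ?_
          by_cases hxy : (x, y) ∈ T
          · have : x ∈ Metric.ball (0 : EuclideanSpace ℝ (Fin d)) (R⁻¹ * ‖y‖) := by
              have h1 : ‖y - (2 * R) • x‖ < R * ‖x‖ := by simpa [hT, dist_eq_norm] using hxy
              have h2 := norm_sub_norm_le ((2 * R) • x) y
              rw [norm_sub_rev _ y, norm_smul, Real.norm_of_nonneg (by positivity)] at h2
              rw [mem_ball_zero_iff, inv_mul_eq_div, lt_div_iff₀ hR0]
              linarith
            rw [Set.indicator_of_mem this]
            exact Set.indicator_le_self' (fun _ _ => zero_le) _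
          · simp only [hF, Set.indicator_of_notMem hxy, zero_le]
      _ = k y * (ENNReal.ofReal ((R⁻¹ * ‖y‖) ^ d) * ω) := by
          rw [lintegral_indicator measurableSet_ball, setLIntegral_const,
            volume_ball_eq _ (by positivity)]
      _ = ω * ENNReal.ofReal (c1 * R⁻¹ ^ d) * h y := by
          have : c1 * (|g y| ^ p * ‖y‖ ^ (-e)) * (R⁻¹ * ‖y‖) ^ d =
              c1 * R⁻¹ ^ d * (|g y| ^ p * ‖y‖ ^ (-(s * p))) := by
            rw [he_def, neg_add, Real.rpow_add hy0, Real.rpow_neg hy0.le (d : ℝ), Real.rpow_natCast,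
              mul_pow]
            field_simp
          rw [← mul_assoc, ← ENNReal.ofReal_mul (by positivity), this,
            ENNReal.ofReal_mul (by positivity)]
          ring
      _ ≤ _ := by
          gcongr
          rw [mul_div_assoc]
          gcongr
          refine (ENNReal.ofReal_le_ofReal hR).trans_eq ?_
          rw [ENNReal.ofReal_div_of_pos (by norm_num)]; simp
  have main : ω * ENNReal.ofReal (R ^ d) * ∫⁻ x, h x ≤
      ω * ENNReal.ofReal (R ^ d) / 2 * (∫⁻ x, h x) +
        ENNReal.ofReal c2 * ∫⁻ x, ∫⁻ y, K x y := by
    calc _ = ∫⁻ x, ω * ENNReal.ofReal (R ^ d) * h x := by rw [lintegral_const_mul _ hhm]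
      _ ≤ ∫⁻ x, ∫⁻ y, (F x y + ENNReal.ofReal c2 * K x y) := by
        refine lintegral_mono_ae ?_
        filter_upwards [Measure.ae_ne volume 0] with x hx using hinner x hx
      _ = ∫⁻ x, ((∫⁻ y, F x y) + ENNReal.ofReal c2 * ∫⁻ y, K x y) := by
        congr 1; ext x
        rw [lintegral_add_left (hFm.of_uncurry_left (x := x)),
          lintegral_const_mul _ (hKm.of_uncurry_left (x := x))]
      _ = (∫⁻ x, ∫⁻ y, F x y) + ENNReal.ofReal c2 * ∫⁻ x, ∫⁻ y, K x y := by
        rw [lintegral_add_left hFm.lintegral_prod_right,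
          lintegral_const_mul _ hKm.lintegral_prod_right]
      _ = (∫⁻ y, ∫⁻ x, F x y) + ENNReal.ofReal c2 * ∫⁻ x, ∫⁻ y, K x y := by
        rw [lintegral_lintegral_swap hFm.aemeasurable]
      _ ≤ _ := by
        gcongr
        rw [← lintegral_const_mul _ hhm]
        exact lintegral_mono hF2
  refine (le_mul_of_le_half_add hfin ?_ ?_ main).trans_eq ?_
  · exact mul_ne_zero hω0 (ENNReal.ofReal_pos.2 (by positivity)).ne'
  · exact ENNReal.mul_ne_top hωt ENNReal.ofReal_ne_top
  · rw [ENNReal.ofReal_div_of_pos (by positivity), ENNReal.ofReal_mul (p := 2) (by norm_num),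
      ENNReal.ofReal_mul hωr.le, hωe, ENNReal.ofReal_ofNat]

lemma setLIntegral_abs_rpow_le_weighted {d : ℕ} {A q W : ℝ} (hA : 0 ≤ A)
    {g : EuclideanSpace ℝ (Fin d) → ℝ}
    (hW : ∫⁻ y, ENNReal.ofReal (‖y‖ ^ (-(A / 2)) * |g y| ^ q) ≤ ENNReal.ofReal W)
    {ρ : ℝ} (hρ : 0 < ρ) :
    ∫⁻ y in {y | ρ / 2 ≤ ‖y‖ ∧ ‖y‖ ≤ 2 * ρ}, ENNReal.ofReal (|g y| ^ q) ≤
      ENNReal.ofReal ((2 * ρ) ^ (A / 2) * W) := by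
  rw [ENNReal.ofReal_mul (by positivity)]
  calc _ ≤ ∫⁻ y in {y | ρ / 2 ≤ ‖y‖ ∧ ‖y‖ ≤ 2 * ρ}, ENNReal.ofReal ((2 * ρ) ^ (A / 2)) *
        ENNReal.ofReal (‖y‖ ^ (-(A / 2)) * |g y| ^ q) := by
        refine setLIntegral_mono' ((measurableSet_le measurable_const measurable_norm).inter
          (measurableSet_le measurable_norm measurable_const)) fun y hy => ?_
        rw [← ENNReal.ofReal_mul (by positivity)]
        apply ENNReal.ofReal_le_ofReal
        have hy0 : 0 < ‖y‖ := lt_of_lt_of_le (by positivity) hy.1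
        have h1 : 1 ≤ (2 * ρ) ^ (A / 2) * ‖y‖ ^ (-(A / 2)) := by
          rw [Real.rpow_neg hy0.le, ← div_eq_mul_inv, one_le_div (by positivity)]
          exact Real.rpow_le_rpow hy0.le hy.2 (by positivity)
        calc |g y| ^ q = 1 * |g y| ^ q := (one_mul _).symm
          _ ≤ _ := by rw [← mul_assoc]; gcongr
    _ ≤ ∫⁻ y, ENNReal.ofReal ((2 * ρ) ^ (A / 2)) *
        ENNReal.ofReal (‖y‖ ^ (-(A / 2)) * |g y| ^ q) := setLIntegral_le_lintegral _ _
    _ = ENNReal.ofReal ((2 * ρ) ^ (A / 2)) *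
        ∫⁻ y, ENNReal.ofReal (‖y‖ ^ (-(A / 2)) * |g y| ^ q) :=
        lintegral_const_mul' _ _ ENNReal.ofReal_ne_top
    _ ≤ _ := by gcongr

lemma one_le_rpow_add_rpow {t a b p q : ℝ} (ht : 0 < t) (ha : 0 ≤ a) (hb : 0 ≤ b)
    (hp : 0 ≤ p) (hq : 0 ≤ q) (h : t ≤ a + b) :
    1 ≤ (2 / t) ^ p * a ^ p + (2 / t) ^ q * b ^ q := by
  have h2 : 0 < 2 / t := by positivity
  rw [← Real.mul_rpow h2.le ha, ← Real.mul_rpow h2.le hb]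
  have e : ∀ z, 2 / t * z = 2 * z / t := fun z => by ring
  rcases le_total b a with hab | hab
  · have : 1 ≤ (2 / t * a) ^ p :=
      Real.one_le_rpow (by rw [e, one_le_div ht]; linarith) hp
    have := Real.rpow_nonneg (mul_nonneg h2.le hb) q
    linarith
  · have : 1 ≤ (2 / t * b) ^ q :=
      Real.one_le_rpow (by rw [e, one_le_div ht]; linarith) hq
    have := Real.rpow_nonneg (mul_nonneg h2.le ha) p
    linarith

lemma ball_average_bound {d : ℕ} (hd : 1 ≤ d) {s p q A W r f : ℝ} (hs : 0 < s) (hp : 1 ≤ p)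
    (hq : 1 ≤ q) (hA : 0 ≤ A) {g : EuclideanSpace ℝ (Fin d) → ℝ}
    (hrad : ∀ x y, ‖x‖ = ‖y‖ → g x = g y) (hg : Continuous g)
    (hW0 : 0 < W)
    (hW : ∫⁻ y, ENNReal.ofReal (‖y‖ ^ (-(A / 2)) * |g y| ^ q) ≤ ENNReal.ofReal W)
    {x : EuclideanSpace ℝ (Fin d)} (ht : 0 < |g x|) (hr : 0 < r) (hrx : 6 * r ≤ ‖x‖)
    (hf0 : 0 ≤ f)
    (hf : ∫⁻ y, ENNReal.ofReal (|g x - g y| ^ p / ‖x - y‖ ^ ((d : ℝ) + s * p)) ≤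
      ENNReal.ofReal f) :
    r ^ d * (volume (Metric.ball (0 : EuclideanSpace ℝ (Fin d)) 1)).toReal ≤
      (2 / |g x|) ^ p * r ^ ((d : ℝ) + s * p) * f +
      (2 / |g x|) ^ q * ((2 * r) ^ d * ((2 * ‖x‖) ^ (A / 2) * W) / (r * ‖x‖ ^ (d - 1))) := by
  have hx : 0 < ‖x‖ := by linarith
  have hgm : Measurable g := hg.measurable
  set e := (d : ℝ) + s * p with he_def
  have he : 0 ≤ e := by positivity
  set t := |g x|
  have hI : ∫⁻ y in Metric.ball x r, ENNReal.ofReal (|g y| ^ q) ≤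
      ENNReal.ofReal ((2 * r) ^ d * ((2 * ‖x‖) ^ (A / 2) * W) / (r * ‖x‖ ^ (d - 1))) := by
    have h1 := setLIntegral_ball_le_shell hd (u := fun y => ENNReal.ofReal (|g y| ^ q))
      (by fun_prop) (fun a b hab => by rw [hrad a b hab]) hr hrx
    have h2 := setLIntegral_abs_rpow_le_weighted hA hW hx
    rw [ENNReal.ofReal_div_of_pos (by positivity), ENNReal.ofReal_mul (by positivity),
      ENNReal.le_div_iff_mul_le (Or.inl (ENNReal.ofReal_pos.2 (by positivity)).ne')
        (Or.inl ENNReal.ofReal_ne_top), mul_comm]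
    exact h1.trans (by gcongr)
  have hpt : ∀ y ∈ Metric.ball x r, (1 : ENNReal) ≤
      ENNReal.ofReal ((2 / t) ^ p * r ^ e) *
        ENNReal.ofReal (|g x - g y| ^ p / ‖x - y‖ ^ e) +
      ENNReal.ofReal ((2 / t) ^ q) * ENNReal.ofReal (|g y| ^ q) := by
    intro y hy
    rw [← ENNReal.ofReal_mul (by positivity), ← ENNReal.ofReal_mul (by positivity),
      ← ENNReal.ofReal_add (by positivity) (by positivity), ← ENNReal.ofReal_one]
    apply ENNReal.ofReal_le_ofReal
    have h1 : t ≤ |g x - g y| + |g y| := by simpa using abs_add_le (g x - g y) (g y)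
    refine (one_le_rpow_add_rpow ht (abs_nonneg _) (abs_nonneg _) (by linarith : 0 ≤ p)
      (by linarith : 0 ≤ q) h1).trans ?_
    gcongr ?_ + _
    rw [mul_assoc]
    gcongr
    rcases eq_or_ne x y with rfl | hxy
    · simp [Real.zero_rpow (by linarith : p ≠ 0)]
    have hxy0 : 0 < ‖x - y‖ := norm_pos_iff.2 (sub_ne_zero.2 hxy)
    have hxyr : ‖x - y‖ ≤ r := by
      rw [norm_sub_rev, ← dist_eq_norm]; exact (Metric.mem_ball.1 hy).le
    rw [mul_div_assoc', le_div_iff₀ (by positivity), mul_comm]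
    gcongr
  rw [← ENNReal.ofReal_le_ofReal_iff (by positivity)]
  have hωt : volume (Metric.ball (0 : EuclideanSpace ℝ (Fin d)) 1) ≠ ⊤ := measure_ball_lt_top.ne
  have hm1 : Measurable fun y => ENNReal.ofReal (|g x - g y| ^ p / ‖x - y‖ ^ e) := by fun_prop
  have hm2 : Measurable fun y => ENNReal.ofReal (|g y| ^ q) := by fun_prop
  calc _ = volume (Metric.ball x r) := by
        rw [ENNReal.ofReal_mul (by positivity), ENNReal.ofReal_toReal hωt, volume_ball_eq x hr]
    _ = ∫⁻ y in Metric.ball x r, 1 := by rw [setLIntegral_one]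
    _ ≤ ∫⁻ y in Metric.ball x r, (ENNReal.ofReal ((2 / t) ^ p * r ^ e) *
        ENNReal.ofReal (|g x - g y| ^ p / ‖x - y‖ ^ e) +
      ENNReal.ofReal ((2 / t) ^ q) * ENNReal.ofReal (|g y| ^ q)) :=
        setLIntegral_mono' measurableSet_ball hpt
    _ = ENNReal.ofReal ((2 / t) ^ p * r ^ e) * (∫⁻ y in Metric.ball x r,
        ENNReal.ofReal (|g x - g y| ^ p / ‖x - y‖ ^ e)) +
      ENNReal.ofReal ((2 / t) ^ q) * ∫⁻ y in Metric.ball x r, ENNReal.ofReal (|g y| ^ q) := by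
        rw [lintegral_add_left (hm1.const_mul _), lintegral_const_mul _ hm1,
          lintegral_const_mul _ hm2]
    _ ≤ _ := by
        rw [ENNReal.ofReal_add (by positivity) (by positivity), ENNReal.ofReal_mul (q := f)
          (by positivity), ENNReal.ofReal_mul (p := (2 / t) ^ q) (by positivity)]
        gcongr
        exact (setLIntegral_le_lintegral _ _).trans hf

/-- Pointwise interpolation between the local difference quotient and the weighted norm. -/
lemma radial_pointwise_bound {d : ℕ} (hd : 1 ≤ d) {s p q : ℝ} (hs : 0 < s) (hp : 1 ≤ p)
    (hq : 1 ≤ q) : ∃ C : ℝ, 0 < C ∧ ∀ A : ℝ, 0 ≤ A → A ≤ d →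
      ∀ g : EuclideanSpace ℝ (Fin d) → ℝ, (∀ x y, ‖x‖ = ‖y‖ → g x = g y) → Continuous g →
      ∀ W : ℝ, 0 < W →
        ∫⁻ y, ENNReal.ofReal (‖y‖ ^ (-(A / 2)) * |g y| ^ q) ≤ ENNReal.ofReal W →
      ∀ x, x ≠ 0 →
        ENNReal.ofReal (|g x| ^ (p + s * p * q) * ‖x‖ ^ (s * p * ((2 * d - 2 - A) / 2))) ≤
          ENNReal.ofReal (C * W ^ (s * p)) *
            ((∫⁻ y, ENNReal.ofReal (|g x - g y| ^ p / ‖x - y‖ ^ ((d : ℝ) + s * p))) +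
              ENNReal.ofReal (|g x| ^ p * ‖x‖ ^ (-(s * p)))) := by
  have : Nonempty (Fin d) := ⟨⟨0, hd⟩⟩
  have hω : 0 < (volume (Metric.ball (0 : EuclideanSpace ℝ (Fin d)) 1)).toReal :=
    ENNReal.toReal_pos (volume_unitBall_pos d).ne' measure_ball_lt_top.ne
  set ω := (volume (Metric.ball (0 : EuclideanSpace ℝ (Fin d)) 1)).toReal with hω_def
  set C₁ := 2 * 2 ^ p / ω + 6 ^ (s * p) with hC₁
  set C₂ := 2 ^ q * 4 ^ d / ω with hC₂
  have hsp : 0 < s * p := by positivity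
  refine ⟨C₁ * (2 * C₂) ^ (s * p), by positivity, fun A hA hAd g hrad hg W hW0 hW x hx => ?_⟩
  have hx0 : 0 < ‖x‖ := norm_pos_iff.2 hx
  set κ := (2 * (d : ℝ) - 2 - A) / 2 with hκ
  rcases (abs_nonneg (g x)).eq_or_lt with ht | ht
  · rw [← ht, Real.zero_rpow (by positivity)]; simp
  set K := ∫⁻ y, ENNReal.ofReal (|g x - g y| ^ p / ‖x - y‖ ^ ((d : ℝ) + s * p)) with hK
  by_cases hKt : K = ⊤
  · rw [hKt, top_add, ENNReal.mul_top (ENNReal.ofReal_pos.2 (by positivity)).ne']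
    exact le_top
  set t := |g x| with ht_def
  set k := K.toReal
  have hk0 : 0 ≤ k := ENNReal.toReal_nonneg
  rw [← ENNReal.ofReal_toReal hKt, ← ENNReal.ofReal_add hk0 (by positivity),
    ← ENNReal.ofReal_mul (by positivity)]
  apply ENNReal.ofReal_le_ofReal
  set r := 2 * C₂ * ‖x‖ ^ (-κ) * W / t ^ q with hr_def
  have hr : 0 < r := by positivity
  have hfp : 0 ≤ t ^ p * ‖x‖ ^ (-(s * p)) := by positivity
  have claim : t ^ p ≤ C₁ * r ^ (s * p) * (k + t ^ p * ‖x‖ ^ (-(s * p))) := by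
    rcases le_or_gt (6 * r) ‖x‖ with h6 | h6
    · have h := ball_average_bound hd hs hp hq hA hrad hg hW0 hW ht hr h6 hk0
        (ENNReal.ofReal_toReal hKt).ge
      rw [← hω_def, ← ht_def] at h
      have h2 : (2 / t) ^ q * ((2 * r) ^ d * ((2 * ‖x‖) ^ (A / 2) * W) / (r * ‖x‖ ^ (d - 1))) ≤
          r ^ d * ω / 2 := by
        have e1 : ‖x‖ ^ (d - 1) = ‖x‖ ^ (A / 2) * ‖x‖ ^ κ := by
          rw [← Real.rpow_add hx0, ← Real.rpow_natCast, Nat.cast_sub hd, hκ]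
          congr 1; push_cast; ring
        have e2 : (2 : ℝ) ^ (A / 2) ≤ 2 ^ d := by
          rw [← Real.rpow_natCast]
          exact Real.rpow_le_rpow_of_exponent_le (by norm_num) (by linarith)
        have e3 : (4 : ℝ) ^ d = 2 ^ d * 2 ^ d := by rw [← mul_pow]; norm_num
        have e4 : (2 / t) ^ q * ((2 * r) ^ d * ((2 * ‖x‖) ^ (A / 2) * W) /
            (r * ‖x‖ ^ (d - 1))) =
            r ^ d * (ω / (2 * 2 ^ d)) * 2 ^ (A / 2) := by
          rw [e1, Real.div_rpow (by norm_num) ht.le, mul_pow,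
            Real.mul_rpow (by norm_num) hx0.le]
          have : r * ‖x‖ ^ κ * t ^ q = 2 * C₂ * W := by
            rw [hr_def, Real.rpow_neg hx0.le]; field_simp
          have e5 : 2 ^ q / t ^ q * (2 ^ d * r ^ d * (2 ^ (A / 2) * ‖x‖ ^ (A / 2) * W) /
            (r * (‖x‖ ^ (A / 2) * ‖x‖ ^ κ))) =
            2 ^ q * (2 ^ d * r ^ d * 2 ^ (A / 2) * W) / (r * ‖x‖ ^ κ * t ^ q) := by
            field_simp
          rw [e5, this, hC₂, e3]
          field_simp
        rw [e4]
        calc _ ≤ r ^ d * (ω / (2 * 2 ^ d)) * 2 ^ d := by gcongr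
          _ = _ := by field_simp
      have h3 : r ^ d * ω / 2 ≤ (2 / t) ^ p * r ^ ((d : ℝ) + s * p) * k := by linarith
      rw [Real.rpow_add hr, Real.rpow_natCast, Real.div_rpow (by norm_num) ht.le] at h3
      have h4 : t ^ p ≤ 2 * 2 ^ p / ω * r ^ (s * p) * k := by
        have h5 : (r ^ d * ω / 2) * (t ^ p * 2 / (r ^ d * ω)) ≤
          (2 ^ p / t ^ p * (r ^ d * r ^ (s * p)) * k) * (t ^ p * 2 / (r ^ d * ω)) := by gcongr
        have e6 : (r ^ d * ω / 2) * (t ^ p * 2 / (r ^ d * ω)) = t ^ p := by field_simp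
        have e7 : (2 ^ p / t ^ p * (r ^ d * r ^ (s * p)) * k) * (t ^ p * 2 / (r ^ d * ω)) =
          2 * 2 ^ p / ω * r ^ (s * p) * k := by field_simp
        rwa [e6, e7] at h5
      refine h4.trans ?_
      gcongr
      · rw [hC₁]; linarith [Real.rpow_nonneg (by norm_num : (0 : ℝ) ≤ 6) (s * p)]
      · linarith
    · calc t ^ p = ‖x‖ ^ (s * p) * (t ^ p * ‖x‖ ^ (-(s * p))) := by
            rw [Real.rpow_neg hx0.le]; field_simp
        _ ≤ (6 * r) ^ (s * p) * (k + t ^ p * ‖x‖ ^ (-(s * p))) := by gcongr; linarith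
        _ = 6 ^ (s * p) * r ^ (s * p) * (k + t ^ p * ‖x‖ ^ (-(s * p))) := by
            rw [Real.mul_rpow (by norm_num) hr.le]
        _ ≤ _ := by gcongr; rw [hC₁]; linarith [show 0 ≤ 2 * 2 ^ p / ω by positivity]
  have hrsp : r ^ (s * p) * (t ^ (s * p * q) * ‖x‖ ^ (s * p * κ)) =
      (2 * C₂) ^ (s * p) * W ^ (s * p) := by
    have e1 : t ^ (s * p * q) = (t ^ q) ^ (s * p) := by
      rw [← Real.rpow_mul ht.le]; congr 1; ring
    have e2 : ‖x‖ ^ (s * p * κ) = (‖x‖ ^ κ) ^ (s * p) := by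
      rw [← Real.rpow_mul hx0.le]; congr 1; ring
    rw [e1, e2, ← Real.mul_rpow (by positivity) (by positivity),
      ← Real.mul_rpow (by positivity) (by positivity),
      ← Real.mul_rpow (by positivity) (by positivity)]
    congr 1
    rw [hr_def, Real.rpow_neg hx0.le]; field_simp
  calc t ^ (p + s * p * q) * ‖x‖ ^ (s * p * κ)
      = t ^ p * (t ^ (s * p * q) * ‖x‖ ^ (s * p * κ)) := by rw [Real.rpow_add ht]; ring
    _ ≤ C₁ * r ^ (s * p) * (k + t ^ p * ‖x‖ ^ (-(s * p))) *
        (t ^ (s * p * q) * ‖x‖ ^ (s * p * κ)) := by gcongr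
    _ = C₁ * (r ^ (s * p) * (t ^ (s * p * q) * ‖x‖ ^ (s * p * κ))) *
        (k + t ^ p * ‖x‖ ^ (-(s * p))) := by ring
    _ = _ := by rw [hrsp]; ring

lemma integrable_mul_norm_rpow_neg {d : ℕ} (hd : 1 ≤ d) {u : EuclideanSpace ℝ (Fin d) → ℝ}
    (hu : Continuous u) (huc : HasCompactSupport u) {b : ℝ} (hb : b < d) :
    Integrable fun x => u x * ‖x‖ ^ (-b) := by
  have hloc : LocallyIntegrable (fun x : EuclideanSpace ℝ (Fin d) => ‖x‖ ^ (-b)) := by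
    refine locallyIntegrable_of_norm_le_rpow (C := 1) (α := b) (by simpa using hd)
      (by simpa using hb) (Filter.Eventually.of_forall fun x => ?_)
      (by fun_prop : Measurable fun x : EuclideanSpace ℝ (Fin d) => ‖x‖ ^ (-b)).aestronglyMeasurable
    rw [one_mul, Real.norm_of_nonneg (by positivity)]
  simpa [smul_eq_mul] using hloc.integrable_smul_left_of_hasCompactSupport hu huc

lemma HasCompactSupport.abs_rpow {E : Type*} [TopologicalSpace E] {g : E → ℝ}
    (hg : HasCompactSupport g) {p : ℝ} (hp : p ≠ 0) : HasCompactSupport fun x => |g x| ^ p :=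
  hg.comp_left (g := fun t : ℝ => |t| ^ p) (by simp [Real.zero_rpow hp])

lemma lintegral_gagliardo_kernel_lt_top {d : ℕ} (hd : 1 ≤ d) {s p : ℝ} (hs0 : 0 < s)
    (hs1 : s < 1) (hp : 1 ≤ p) :
    ∫⁻ h : EuclideanSpace ℝ (Fin d), (Metric.ball (0 : EuclideanSpace ℝ (Fin d)) 1).indicator
      (fun h => ENNReal.ofReal (‖h‖ ^ (-((d : ℝ) + s * p - p)))) h +
      ENNReal.ofReal ((1 + ‖h‖) ^ (-((d : ℝ) + s * p))) < ⊤ := by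
  have hsp : 0 < s * p := by positivity
  have hm : Measurable fun h : EuclideanSpace ℝ (Fin d) =>
      ‖h‖ ^ (-((d : ℝ) + s * p - p)) := by fun_prop
  rw [lintegral_add_right _ (by fun_prop), lintegral_indicator measurableSet_ball]
  refine ENNReal.add_lt_top.2 ⟨?_, ?_⟩
  · refine IntegrableOn.setLIntegral_lt_top ?_
    refine integrableOn_ball_of_norm_le_rpow (C := 1) (α := (d : ℝ) + s * p - p)
      (by simpa using hd) ?_ (Filter.Eventually.of_forall fun x => ?_) hm.aestronglyMeasurable
    · simp only [finrank_euclideanSpace_fin]; nlinarith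
    · rw [one_mul, Real.norm_of_nonneg (by positivity)]
  · refine Integrable.lintegral_lt_top ?_
    apply integrable_one_add_norm
    simp only [finrank_euclideanSpace_fin]; linarith

lemma gagliardo_integrand_le {d : ℕ} {s p L M : ℝ} (hs0 : 0 < s) (hp : 1 ≤ p) (hL : 0 ≤ L)
    (hM : 0 ≤ M) {g : EuclideanSpace ℝ (Fin d) → ℝ} {x y : EuclideanSpace ℝ (Fin d)}
    (h1 : |g x - g y| ≤ L * ‖x - y‖) (h2 : |g x - g y| ≤ M) :
    ENNReal.ofReal (|g x - g y| ^ p / ‖x - y‖ ^ ((d : ℝ) + s * p)) ≤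
      ENNReal.ofReal (L ^ p + M ^ p * 2 ^ ((d : ℝ) + s * p)) *
      ((Metric.ball (0 : EuclideanSpace ℝ (Fin d)) 1).indicator
        (fun h => ENNReal.ofReal (‖h‖ ^ (-((d : ℝ) + s * p - p)))) (x - y) +
      ENNReal.ofReal ((1 + ‖x - y‖) ^ (-((d : ℝ) + s * p)))) := by
  have he : 0 < (d : ℝ) + s * p := by positivity
  set e := (d : ℝ) + s * p
  rcases eq_or_ne x y with rfl | hxy
  · simp [Real.zero_rpow (by linarith : p ≠ 0)]
  have hn : 0 < ‖x - y‖ := norm_pos_iff.2 (sub_ne_zero.2 hxy)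
  rcases lt_or_ge ‖x - y‖ 1 with hlt | hge
  · have hb : x - y ∈ Metric.ball (0 : EuclideanSpace ℝ (Fin d)) 1 := by simpa using hlt
    rw [Set.indicator_of_mem hb]
    calc _ ≤ ENNReal.ofReal (L ^ p + M ^ p * 2 ^ e) *
          ENNReal.ofReal (‖x - y‖ ^ (-(e - p))) := by
          rw [← ENNReal.ofReal_mul (by positivity)]
          apply ENNReal.ofReal_le_ofReal
          calc |g x - g y| ^ p / ‖x - y‖ ^ e ≤ (L * ‖x - y‖) ^ p / ‖x - y‖ ^ e := by gcongr
            _ = L ^ p * ‖x - y‖ ^ (-(e - p)) := by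
              rw [Real.mul_rpow hL hn.le, neg_sub, Real.rpow_sub hn]; ring
            _ ≤ _ := by gcongr; linarith [show 0 ≤ M ^ p * 2 ^ e by positivity]
      _ ≤ _ := by gcongr; exact le_self_add
  · calc _ ≤ ENNReal.ofReal (L ^ p + M ^ p * 2 ^ e) *
          ENNReal.ofReal ((1 + ‖x - y‖) ^ (-e)) := by
          rw [← ENNReal.ofReal_mul (by positivity)]
          apply ENNReal.ofReal_le_ofReal
          calc |g x - g y| ^ p / ‖x - y‖ ^ e ≤ M ^ p * ‖x - y‖ ^ (-e) := by
                rw [Real.rpow_neg hn.le, ← div_eq_mul_inv]; gcongr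
            _ ≤ M ^ p * (2 ^ e * (1 + ‖x - y‖) ^ (-e)) := by
              gcongr
              exact rpow_neg_le_mul_rpow_neg hn (by linarith) (by norm_num) he.le (by linarith)
            _ = M ^ p * 2 ^ e * (1 + ‖x - y‖) ^ (-e) := by ring
            _ ≤ _ := by gcongr; linarith [show 0 ≤ L ^ p by positivity]
      _ ≤ _ := by gcongr; exact le_add_self

lemma lintegral_gagliardo_lt_top {d : ℕ} (hd : 1 ≤ d) {s p : ℝ} (hs0 : 0 < s)
    (hs1 : s < 1) (hp : 1 ≤ p) {g : EuclideanSpace ℝ (Fin d) → ℝ} (hg : ContDiff ℝ 1 g)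
    (hgc : HasCompactSupport g) :
    ∫⁻ x, ∫⁻ y, ENNReal.ofReal (|g x - g y| ^ p / ‖x - y‖ ^ ((d : ℝ) + s * p)) < ⊤ := by
  obtain ⟨L, hL⟩ := hg.lipschitzWith_of_hasCompactSupport hgc (by norm_num)
  obtain ⟨M, hM⟩ := hg.continuous.bounded_above_of_compact_support hgc
  have hM0 : 0 ≤ M := (norm_nonneg _).trans (hM 0)
  set k : EuclideanSpace ℝ (Fin d) → ENNReal := fun h =>
    (Metric.ball (0 : EuclideanSpace ℝ (Fin d)) 1).indicator
        (fun h => ENNReal.ofReal (‖h‖ ^ (-((d : ℝ) + s * p - p)))) h +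
      ENNReal.ofReal ((1 + ‖h‖) ^ (-((d : ℝ) + s * p))) with hk
  have hkm : Measurable k := by
    refine Measurable.add (Measurable.indicator ?_ measurableSet_ball) ?_ <;> fun_prop
  have hkfin : ∫⁻ h, k h < ⊤ := lintegral_gagliardo_kernel_lt_top hd hs0 hs1 hp
  set C := ENNReal.ofReal ((L : ℝ) ^ p + (2 * M) ^ p * 2 ^ ((d : ℝ) + s * p)) with hC
  set S := tsupport g with hS
  have hSm : MeasurableSet S := (isClosed_tsupport g).measurableSet
  have hSv : volume S < ⊤ := hgc.isCompact.measure_lt_top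
  have hbound : ∀ x y, ENNReal.ofReal (|g x - g y| ^ p / ‖x - y‖ ^ ((d : ℝ) + s * p)) ≤
      S.indicator (fun _ => C) x * k (x - y) + S.indicator (fun _ => C) y * k (x - y) := by
    intro x y
    by_cases hxy : x ∈ S ∨ y ∈ S
    · have h1 : |g x - g y| ≤ L * ‖x - y‖ := by
        simpa [Real.dist_eq, dist_eq_norm] using hL.dist_le_mul x y
      have h2 : |g x - g y| ≤ 2 * M := by
        have := hM x; have := hM y
        rw [Real.norm_eq_abs] at *
        linarith [abs_sub (g x) (g y)]
      refine (gagliardo_integrand_le hs0 hp L.2 (by positivity) h1 h2).trans ?_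
      rcases hxy with h | h
      · rw [Set.indicator_of_mem h]; exact le_self_add
      · rw [Set.indicator_of_mem h (f := fun _ => C)]; exact le_add_self
    · push Not at hxy
      rw [image_eq_zero_of_notMem_tsupport hxy.1, image_eq_zero_of_notMem_tsupport hxy.2]
      simp [Real.zero_rpow (by linarith : p ≠ 0)]
  have hm1 : Measurable (S.indicator fun _ => C) := measurable_const.indicator hSm
  have hm2 : Measurable (Function.uncurry fun x y : EuclideanSpace ℝ (Fin d) => k (x - y)) :=
    hkm.comp measurable_sub
  have hI : ∫⁻ x, S.indicator (fun _ => C) x < ⊤ := by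
    rw [lintegral_indicator hSm, setLIntegral_const]
    exact ENNReal.mul_lt_top ENNReal.ofReal_lt_top hSv
  have hleft : ∀ x, ∫⁻ y, S.indicator (fun _ => C) x * k (x - y) =
      S.indicator (fun _ => C) x * ∫⁻ h, k h := by
    intro x
    rw [lintegral_const_mul _ (hm2.of_uncurry_left (x := x)), lintegral_sub_left_eq_self k x]
  have hright : ∀ y, ∫⁻ x, S.indicator (fun _ => C) y * k (x - y) =
      S.indicator (fun _ => C) y * ∫⁻ h, k h := by
    intro y
    rw [lintegral_const_mul _ (hm2.of_uncurry_right (y := y)), lintegral_sub_right_eq_self k y]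
  have hmB : Measurable (Function.uncurry fun x y : EuclideanSpace ℝ (Fin d) =>
      S.indicator (fun _ => C) y * k (x - y)) := (hm1.comp measurable_snd).mul hm2
  have hmA : Measurable (Function.uncurry fun x y : EuclideanSpace ℝ (Fin d) =>
      S.indicator (fun _ => C) x * k (x - y)) := (hm1.comp measurable_fst).mul hm2
  calc _ ≤ ∫⁻ x, ∫⁻ y, (S.indicator (fun _ => C) x * k (x - y) +
        S.indicator (fun _ => C) y * k (x - y)) :=
        lintegral_mono fun x => lintegral_mono fun y => hbound x y
    _ = ∫⁻ x, ((∫⁻ y, S.indicator (fun _ => C) x * k (x - y)) +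
        ∫⁻ y, S.indicator (fun _ => C) y * k (x - y)) := by
        congr 1; ext x
        rw [lintegral_add_left (hmA.of_uncurry_left (x := x))]
    _ = (∫⁻ x, ∫⁻ y, S.indicator (fun _ => C) x * k (x - y)) +
        ∫⁻ x, ∫⁻ y, S.indicator (fun _ => C) y * k (x - y) := by
        rw [lintegral_add_left hmA.lintegral_prod_right]
    _ = (∫⁻ x, ∫⁻ y, S.indicator (fun _ => C) x * k (x - y)) +
        ∫⁻ y, ∫⁻ x, S.indicator (fun _ => C) y * k (x - y) := by
        rw [lintegral_lintegral_swap (f := fun x y => S.indicator (fun _ => C) y * k (x - y))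
          hmB.aemeasurable]
    _ < ⊤ := by
        simp_rw [hleft, hright]
        rw [lintegral_mul_const _ hm1]
        exact ENNReal.add_lt_top.2 ⟨ENNReal.mul_lt_top hI hkfin, ENNReal.mul_lt_top hI hkfin⟩

lemma integral_gagliardo_eq {d : ℕ} (hd : 1 ≤ d) {s p : ℝ} (hs0 : 0 < s)
    (hs1 : s < 1) (hp : 1 ≤ p) {g : EuclideanSpace ℝ (Fin d) → ℝ} (hg : ContDiff ℝ 1 g)
    (hgc : HasCompactSupport g) :
    ENNReal.ofReal (∫ x, ∫ y, |g x - g y| ^ p / ‖x - y‖ ^ ((d : ℝ) + s * p)) =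
    ∫⁻ x, ∫⁻ y, ENNReal.ofReal (|g x - g y| ^ p / ‖x - y‖ ^ ((d : ℝ) + s * p)) := by
  have hfin := lintegral_gagliardo_lt_top hd hs0 hs1 hp hg hgc
  have hgm : Measurable g := hg.continuous.measurable
  have hm : Measurable (Function.uncurry fun x y : EuclideanSpace ℝ (Fin d) =>
      ENNReal.ofReal (|g x - g y| ^ p / ‖x - y‖ ^ ((d : ℝ) + s * p))) := by
    simp only [Function.uncurry_def]; fun_prop
  have hin : ∀ x, ∫ y, |g x - g y| ^ p / ‖x - y‖ ^ ((d : ℝ) + s * p) =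
      (∫⁻ y, ENNReal.ofReal (|g x - g y| ^ p / ‖x - y‖ ^ ((d : ℝ) + s * p))).toReal := by
    intro x
    refine integral_eq_lintegral_of_nonneg_ae (Filter.Eventually.of_forall fun y => ?_) ?_
    · simp only [Pi.zero_apply]; positivity
    · exact Measurable.aestronglyMeasurable (by fun_prop)
  simp_rw [hin]
  have hmi := hm.lintegral_prod_right (ν := volume)
  rw [integral_toReal hmi.aemeasurable (ae_lt_top hmi hfin.ne), ENNReal.ofReal_toReal hfin.ne]

lemma integrable_norm_rpow_neg_mul {d : ℕ} (hd : 1 ≤ d) {g : EuclideanSpace ℝ (Fin d) → ℝ}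
    (hg : Continuous g) (hgc : HasCompactSupport g) {q b : ℝ} (hq : 0 < q) (hb : b < d) :
    Integrable fun x => ‖x‖ ^ (-b) * |g x| ^ q := by
  have := integrable_mul_norm_rpow_neg hd (u := fun x => |g x| ^ q)
    (hg.abs.rpow_const fun x => Or.inr hq.le) (hgc.abs_rpow hq.ne') hb
  simpa only [mul_comm] using this

lemma integral_abs_rpow_eq_zero_of_weighted {d : ℕ} (hd : 1 ≤ d)
    {g : EuclideanSpace ℝ (Fin d) → ℝ} (hg : Continuous g) (hgc : HasCompactSupport g)
    {q b γ : ℝ} (hq : 0 < q) (hb : b < d) (hγ : γ ≠ 0)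
    (h : ∫ x, ‖x‖ ^ (-b) * |g x| ^ q = 0) : ∫ x, |g x| ^ γ = 0 := by
  have : Nonempty (Fin d) := ⟨⟨0, hd⟩⟩
  have h0 := (integral_eq_zero_iff_of_nonneg (fun x => by positivity)
    (integrable_norm_rpow_neg_mul hd hg hgc hq hb)).1 h
  refine integral_eq_zero_of_ae ?_
  filter_upwards [h0, compl_mem_ae_iff.2 (measure_singleton (0 : EuclideanSpace ℝ (Fin d)))]
    with x hx hx0
  have hn : 0 < ‖x‖ := norm_pos_iff.2 hx0
  have h1 : |g x| ^ q = 0 := by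
    simpa [(Real.rpow_pos_of_pos hn (-b)).ne'] using hx
  have h2 : |g x| = 0 := ((Real.rpow_eq_zero_iff_of_nonneg (abs_nonneg _)).1 h1).1
  simp [h2, Real.zero_rpow hγ]

lemma integral_abs_rpow_le_gagliardo {d : ℕ} (hd : 2 ≤ d) {s p q : ℝ} (hs0 : 0 < s)
    (hs1 : s < 1) (hp : 1 ≤ p) (hq : 1 ≤ q) (hsp : s * p < d) :
    ∃ D : ℝ, 0 < D ∧ ∀ A l : ℝ, 0 < A → A < d → 0 < l → l < 1 →
      l * (A + s * p * (2 * d - 2 - A)) = A →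
      ∀ g : EuclideanSpace ℝ (Fin d) → ℝ, (∀ x y, ‖x‖ = ‖y‖ → g x = g y) →
      ContDiff ℝ 1 g → HasCompactSupport g →
      ∫ x, |g x| ^ (l * (p + s * p * q) + (1 - l) * q) ≤
        (D * ∫ x, ∫ y, |g x - g y| ^ p / ‖x - y‖ ^ ((d : ℝ) + s * p)) ^ l *
        (∫ x, ‖x‖ ^ (-(A / 2)) * |g x| ^ q) ^ (s * p * l + (1 - l)) := by
  have hd1 : 1 ≤ d := by omega
  have hne : Nonempty (Fin d) := ⟨⟨0, hd1⟩⟩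
  obtain ⟨CH, hCH, hardy⟩ := lintegral_hardy_le hd1 hs0 hp hsp
  obtain ⟨C, hC, hrad⟩ := radial_pointwise_bound (d := d) hd1 hs0 hp hq
  refine ⟨C * (1 + CH), by positivity, ?_⟩
  intro A l hA hAd hl0 hl1 hl g hgr hg hgc
  have hc := hg.continuous
  have hgm : Measurable g := hc.measurable
  set J := ∫ x, ∫ y, |g x - g y| ^ p / ‖x - y‖ ^ ((d : ℝ) + s * p) with hJ
  set W := ∫ x, ‖x‖ ^ (-(A / 2)) * |g x| ^ q with hW
  set γ := l * (p + s * p * q) + (1 - l) * q with hγ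
  have hspp : 0 < s * p := by positivity
  have h1l : 0 < 1 - l := by linarith
  have hγ0 : 0 < γ := by positivity
  have hJ0 : 0 ≤ J := integral_nonneg fun x => integral_nonneg fun y => by positivity
  have hW0 : 0 ≤ W := integral_nonneg fun x => by positivity
  have hWint := integrable_norm_rpow_neg_mul hd1 hc hgc (q := q) (b := A / 2)
    (by linarith) (by linarith)
  rcases hW0.eq_or_lt with hWz | hWpos
  · rw [integral_abs_rpow_eq_zero_of_weighted hd1 hc hgc (by linarith) (by linarith) hγ0.ne'
      (hW.symm.trans hWz.symm)]
    positivity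
  have hWl : ∫⁻ y, ENNReal.ofReal (‖y‖ ^ (-(A / 2)) * |g y| ^ q) = ENNReal.ofReal W :=
    (ofReal_integral_eq_lintegral_ofReal hWint
      (Filter.Eventually.of_forall fun x => by simp only [Pi.zero_apply]; positivity)).symm
  have hJl := integral_gagliardo_eq hd1 hs0 hs1 hp hg hgc
  have hHfin : ∫⁻ x, ENNReal.ofReal (|g x| ^ p * ‖x‖ ^ (-(s * p))) ≠ ⊤ := by
    have := integrable_norm_rpow_neg_mul hd1 hc hgc (q := p) (by linarith) hsp
    simp only [mul_comm] at this ⊢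
    exact this.lintegral_lt_top.ne
  have hH := hardy g hc hHfin
  rw [← hJl, ← ENNReal.ofReal_mul hCH.le] at hH
  set F : EuclideanSpace ℝ (Fin d) → ENNReal := fun x =>
    ENNReal.ofReal (|g x| ^ (p + s * p * q) * ‖x‖ ^ (s * p * ((2 * d - 2 - A) / 2))) with hF
  set G : EuclideanSpace ℝ (Fin d) → ENNReal := fun x =>
    ENNReal.ofReal (‖x‖ ^ (-(A / 2)) * |g x| ^ q) with hG
  have hae : ∀ᵐ x : EuclideanSpace ℝ (Fin d), x ≠ 0 :=
    compl_mem_ae_iff.2 (measure_singleton (0 : EuclideanSpace ℝ (Fin d)))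
  have hFint : ∫⁻ x, F x ≤ ENNReal.ofReal (C * W ^ (s * p) * ((1 + CH) * J)) := by
    calc ∫⁻ x, F x ≤ ∫⁻ x, ENNReal.ofReal (C * W ^ (s * p)) *
          ((∫⁻ y, ENNReal.ofReal (|g x - g y| ^ p / ‖x - y‖ ^ ((d : ℝ) + s * p))) +
            ENNReal.ofReal (|g x| ^ p * ‖x‖ ^ (-(s * p)))) := by
          refine lintegral_mono_ae ?_
          filter_upwards [hae] with x hx
          exact hrad A hA.le hAd.le g hgr hc W hWpos hWl.le x hx
      _ = ENNReal.ofReal (C * W ^ (s * p)) *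
          ((∫⁻ x, ∫⁻ y, ENNReal.ofReal (|g x - g y| ^ p / ‖x - y‖ ^ ((d : ℝ) + s * p))) +
            ∫⁻ x, ENNReal.ofReal (|g x| ^ p * ‖x‖ ^ (-(s * p)))) := by
          rw [lintegral_const_mul' _ _ ENNReal.ofReal_ne_top, lintegral_add_right _ (by fun_prop)]
      _ ≤ ENNReal.ofReal (C * W ^ (s * p)) * (ENNReal.ofReal J + ENNReal.ofReal (CH * J)) := by
          rw [← hJl]; gcongr
      _ = _ := by
          rw [← ENNReal.ofReal_add hJ0 (by positivity), ← ENNReal.ofReal_mul (by positivity)]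
          ring_nf
  rw [integral_eq_lintegral_of_nonneg_ae (Filter.Eventually.of_forall fun x => by
    simp only [Pi.zero_apply]; positivity)
    (hc.abs.rpow_const fun x => Or.inr hγ0.le).aestronglyMeasurable]
  refine ENNReal.toReal_le_of_le_ofReal (by positivity) ?_
  calc ∫⁻ x, ENNReal.ofReal (|g x| ^ γ) ≤ ∫⁻ x, F x ^ l * G x ^ (1 - l) := by
        refine lintegral_mono_ae ?_
        filter_upwards [hae] with x hx
        have hn : 0 < ‖x‖ := norm_pos_iff.2 hx
        rw [hF, hG, ENNReal.ofReal_rpow_of_nonneg (by positivity) hl0.le,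
          ENNReal.ofReal_rpow_of_nonneg (by positivity) h1l.le,
          ← ENNReal.ofReal_mul (by positivity)]
        apply ENNReal.ofReal_le_ofReal
        rw [Real.mul_rpow (by positivity) (by positivity),
          Real.mul_rpow (by positivity) (by positivity), ← Real.rpow_mul (abs_nonneg _),
          ← Real.rpow_mul (abs_nonneg _), ← Real.rpow_mul hn.le, ← Real.rpow_mul hn.le]
        have e1 : |g x| ^ γ = |g x| ^ ((p + s * p * q) * l) * |g x| ^ (q * (1 - l)) := by
          rw [← Real.rpow_add_of_nonneg (abs_nonneg _) (by positivity) (by positivity), hγ]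
          ring_nf
        have e2 : ‖x‖ ^ (s * p * ((2 * d - 2 - A) / 2) * l) * ‖x‖ ^ (-(A / 2) * (1 - l)) = 1 := by
          rw [← Real.rpow_add hn, show s * p * ((2 * d - 2 - A) / 2) * l + -(A / 2) * (1 - l) = 0
            by linear_combination hl / 2, Real.rpow_zero]
        rw [e1]
        apply le_of_eq
        linear_combination (-(|g x| ^ ((p + s * p * q) * l) * |g x| ^ (q * (1 - l)))) * e2
    _ ≤ (∫⁻ x, F x) ^ l * (∫⁻ x, G x) ^ (1 - l) :=
        ENNReal.lintegral_mul_norm_pow_le (by fun_prop) (by fun_prop) hl0.le h1l.le (by ring)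
    _ ≤ ENNReal.ofReal (C * W ^ (s * p) * ((1 + CH) * J)) ^ l * ENNReal.ofReal W ^ (1 - l) := by
        rw [hWl]; gcongr
    _ = _ := by
        rw [ENNReal.ofReal_rpow_of_nonneg (by positivity) hl0.le,
          ENNReal.ofReal_rpow_of_nonneg (by positivity) h1l.le,
          ← ENNReal.ofReal_mul (by positivity), Real.rpow_add hWpos, Real.rpow_mul hWpos.le (s * p) l,
          show C * W ^ (s * p) * ((1 + CH) * J) = C * (1 + CH) * J * W ^ (s * p) by ring,
          Real.mul_rpow (by positivity) (by positivity), mul_assoc]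

lemma abs_rpow_le_integral_of_eq_zero {φ : ℝ → ℝ} (hφ : ContDiff ℝ 1 φ) {k r R : ℝ} (hk : 1 ≤ k)
    (hrR : r ≤ R) (hR : φ R = 0) :
    |φ r| ^ k ≤ k * ∫ t in r..R, |φ t| ^ (k - 1) * |deriv φ t| := by
  have hd : ∀ t, HasDerivAt φ (deriv φ t) t := fun t =>
    (hφ.differentiable (by norm_num) t).hasDerivAt
  have hcd : Continuous (deriv φ) := hφ.continuous_deriv le_rfl
  have hcont : Continuous fun t => |φ t| ^ (k - 1) * |deriv φ t| :=
    (hφ.continuous.abs.rpow_const fun x => Or.inr (by linarith)).mul hcd.abs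
  rcases hk.eq_or_lt with rfl | hk1
  · have hint : ∀ ψ : ℝ → ℝ, Continuous ψ → (∀ t, HasDerivAt ψ (deriv ψ t) t) →
        (∀ t, deriv ψ t ≤ |deriv φ t|) → ψ R - ψ r ≤ ∫ t in r..R, |deriv φ t| :=
      fun ψ h1 h2 h3 => intervalIntegral.sub_le_integral_of_hasDeriv_right_of_le hrR
        h1.continuousOn (fun t _ => (h2 t).hasDerivWithinAt) hcd.abs.continuousOn.integrableOn_Icc
        fun t _ => h3 t
    have h1 := hint φ hφ.continuous hd fun t => le_abs_self _
    have h2 := hint (-φ) hφ.continuous.neg (fun t => by simpa [deriv.neg] using (hd t).neg)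
      fun t => by simpa [deriv.neg] using neg_le_abs (deriv φ t)
    simp only [Pi.neg_apply, hR] at h1 h2
    simp only [Real.rpow_one, sub_self, Real.rpow_zero, one_mul]
    exact abs_le'.2 ⟨by linarith, by linarith⟩
  · rw [← intervalIntegral.integral_const_mul]
    have hder : ∀ t, HasDerivAt (fun t => -|φ t| ^ k)
        (-(k * |φ t| ^ (k - 2) * φ t * deriv φ t)) t := fun t =>
      ((hasDerivAt_abs_rpow (φ t) hk1).comp t (hd t)).neg
    have h := intervalIntegral.sub_le_integral_of_hasDeriv_right_of_le
      (φ := fun t => k * (|φ t| ^ (k - 1) * |deriv φ t|)) hrR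
      (g := fun t => -|φ t| ^ k)
      (hφ.continuous.abs.rpow_const fun x => Or.inr (by linarith)).neg.continuousOn
      (fun t _ => (hder t).hasDerivWithinAt) (hcont.const_mul k).continuousOn.integrableOn_Icc
      (fun t _ => by
        refine (neg_le_abs _).trans (le_of_eq ?_)
        rw [abs_mul, abs_mul, abs_mul, abs_of_nonneg (by linarith : 0 ≤ k),
          abs_of_nonneg (by positivity : 0 ≤ |φ t| ^ (k - 2))]
        rcases eq_or_ne (φ t) 0 with h0 | h0
        · simp [h0, Real.zero_rpow (by linarith : k - 1 ≠ 0)]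
        · rw [show k - 1 = k - 2 + 1 by ring, Real.rpow_add_one (abs_pos.2 h0).ne']; ring)
    simpa [hR, Real.zero_rpow (by linarith : k ≠ 0)] using h

lemma exists_radial_profile {d : ℕ} (hd : 1 ≤ d) {g : EuclideanSpace ℝ (Fin d) → ℝ}
    (hgr : ∀ x y, ‖x‖ = ‖y‖ → g x = g y) (hg : ContDiff ℝ 1 g) (hgc : HasCompactSupport g) :
    ∃ φ : ℝ → ℝ, ContDiff ℝ 1 φ ∧ (∀ y, g y = φ ‖y‖) ∧
      (∀ y, |deriv φ ‖y‖| ≤ ‖fderiv ℝ g y‖) ∧ ∃ R, ∀ t, R ≤ t → φ t = 0 := by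
  obtain ⟨v, hv⟩ : ∃ v : EuclideanSpace ℝ (Fin d), ‖v‖ = 1 :=
    ⟨EuclideanSpace.single ⟨0, hd⟩ 1, by simp⟩
  have hgφ : ∀ u : EuclideanSpace ℝ (Fin d), ‖u‖ = 1 → ∀ t : ℝ, g (t • v) = g (t • u) :=
    fun u hu t => hgr _ _ (by simp [norm_smul, hu, hv])
  refine ⟨fun t => g (t • v), by fun_prop, fun y => hgr _ _ (by simp [norm_smul, hv]), ?_, ?_⟩
  · intro y
    obtain ⟨u, hu, huy⟩ : ∃ u : EuclideanSpace ℝ (Fin d), ‖u‖ = 1 ∧ ‖y‖ • u = y := by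
      rcases eq_or_ne y 0 with rfl | hy
      · exact ⟨v, hv, by simp⟩
      · exact ⟨‖y‖⁻¹ • y, norm_smul_inv_norm hy, smul_inv_smul₀ (norm_ne_zero_iff.2 hy) y⟩
    have h1 : HasDerivAt (fun t : ℝ => g (t • v)) (fderiv ℝ g y u) ‖y‖ := by
      rw [funext (hgφ u hu)]
      have h2 : HasDerivAt (fun t : ℝ => t • u) u ‖y‖ := by
        simpa using (hasDerivAt_id ‖y‖).smul_const u
      have h3 : HasFDerivAt g (fderiv ℝ g y) (‖y‖ • u) := by
        rw [huy]; exact (hg.differentiable (by norm_num) y).hasFDerivAt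
      exact h3.comp_hasDerivAt _ h2
    rw [h1.deriv, ← Real.norm_eq_abs]
    simpa [hu] using (fderiv ℝ g y).le_opNorm u
  · obtain ⟨M, hM⟩ := hgc.isCompact.isBounded.exists_norm_le
    refine ⟨|M| + 1, fun t ht => image_eq_zero_of_notMem_tsupport (f := g) fun hmem => ?_⟩
    have h := hM _ hmem
    rw [norm_smul, hv, mul_one, Real.norm_of_nonneg (by linarith [abs_nonneg M])] at h
    linarith [le_abs_self M]

lemma integral_indicator_Ioc_norm {d : ℕ} (hd : 1 ≤ d) {r R : ℝ} (hr : 0 < r) (hrR : r ≤ R)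
    (ψ : ℝ → ℝ) :
    ∫ y : EuclideanSpace ℝ (Fin d),
      (Set.Ioc r R).indicator (fun t => (t ^ (d - 1))⁻¹ * ψ t) ‖y‖ =
      d * volume.real (Metric.ball (0 : EuclideanSpace ℝ (Fin d)) 1) * ∫ t in r..R, ψ t := by
  have : Nontrivial (EuclideanSpace ℝ (Fin d)) := ⟨⟨0, EuclideanSpace.single ⟨0, hd⟩ 1,
    fun h => by simpa using congrArg norm h⟩⟩
  rw [integral_fun_norm_addHaar, finrank_euclideanSpace_fin, nsmul_eq_mul, smul_eq_mul,
    ← mul_assoc, intervalIntegral.integral_of_le hrR, ← integral_indicator measurableSet_Ioi,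
    ← integral_indicator measurableSet_Ioc]
  congr 2
  ext t
  by_cases ht : t ∈ Set.Ioc r R
  · have ht0 : 0 < t := hr.trans ht.1
    rw [Set.indicator_of_mem (Set.mem_Ioi.2 ht0), Set.indicator_of_mem ht,
      Set.indicator_of_mem ht, smul_eq_mul, mul_inv_cancel_left₀ (by positivity)]
  · rw [Set.indicator_of_notMem ht]
    simp [Set.indicator_of_notMem ht]

lemma integral_norm_le_of_le_rpow_mul {E : Type*} [MeasurableSpace E] {μ : Measure E}
    {h u v : E → ℝ} {a θ : ℝ} (hθ0 : 0 ≤ θ) (hθ1 : θ ≤ 1) (ha : 0 ≤ a) (hh : Measurable h)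
    (hh0 : ∀ y, 0 ≤ h y) (hu : Integrable u μ) (hu0 : ∀ y, 0 ≤ u y) (hv : Integrable v μ)
    (hv0 : ∀ y, 0 ≤ v y) (hle : ∀ y, h y ≤ a * (u y ^ θ * v y ^ (1 - θ))) :
    ∫ y, h y ∂μ ≤ a * ((∫ y, u y ∂μ) ^ θ * (∫ y, v y ∂μ) ^ (1 - θ)) := by
  have hθ : 0 ≤ 1 - θ := by linarith
  have hU : 0 ≤ ∫ y, u y ∂μ := integral_nonneg hu0
  have hV : 0 ≤ ∫ y, v y ∂μ := integral_nonneg hv0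
  rw [integral_eq_lintegral_of_nonneg_ae (Filter.Eventually.of_forall hh0)
    hh.aestronglyMeasurable]
  refine ENNReal.toReal_le_of_le_ofReal (by positivity) ?_
  calc ∫⁻ y, ENNReal.ofReal (h y) ∂μ
      ≤ ∫⁻ y, ENNReal.ofReal a * (ENNReal.ofReal (u y) ^ θ * ENNReal.ofReal (v y) ^ (1 - θ)) ∂μ := by
        refine lintegral_mono fun y => ?_
        have := hu0 y
        have := hv0 y
        rw [ENNReal.ofReal_rpow_of_nonneg (hu0 y) hθ0, ENNReal.ofReal_rpow_of_nonneg (hv0 y) hθ,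
          ← ENNReal.ofReal_mul (by positivity), ← ENNReal.ofReal_mul ha]
        exact ENNReal.ofReal_le_ofReal (hle y)
    _ = ENNReal.ofReal a *
        ∫⁻ y, (ENNReal.ofReal (u y) ^ θ * ENNReal.ofReal (v y) ^ (1 - θ)) ∂μ :=
        lintegral_const_mul' _ _ ENNReal.ofReal_ne_top
    _ ≤ ENNReal.ofReal a * ((∫⁻ y, ENNReal.ofReal (u y) ∂μ) ^ θ *
        (∫⁻ y, ENNReal.ofReal (v y) ∂μ) ^ (1 - θ)) := by
        gcongr
        exact ENNReal.lintegral_mul_norm_pow_le hu.aemeasurable.ennreal_ofReal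
          hv.aemeasurable.ennreal_ofReal hθ0 hθ (by ring)
    _ = _ := by
        rw [← ofReal_integral_eq_lintegral_ofReal hu (Filter.Eventually.of_forall hu0),
          ← ofReal_integral_eq_lintegral_ofReal hv (Filter.Eventually.of_forall hv0),
          ENNReal.ofReal_rpow_of_nonneg hU hθ0, ENNReal.ofReal_rpow_of_nonneg hV hθ,
          ← ENNReal.ofReal_mul (by positivity), ← ENNReal.ofReal_mul ha]

lemma integrable_norm_fderiv_rpow {d : ℕ} {p : ℝ} (hp : 0 < p)
    {g : EuclideanSpace ℝ (Fin d) → ℝ} (hg : ContDiff ℝ 1 g) (hgc : HasCompactSupport g) :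
    Integrable fun y => ‖fderiv ℝ g y‖ ^ p :=
  Continuous.integrable_of_hasCompactSupport
    ((hg.continuous_fderiv (by norm_num)).norm.rpow_const fun x => Or.inr hp.le)
    ((hgc.fderiv ℝ).comp_left (g := fun L => ‖L‖ ^ p) (by simp [Real.zero_rpow hp.ne']))

lemma inv_pow_mul_rpow_mul_le {d : ℕ} (hd : 2 ≤ d) {p q A r n a b c : ℝ} (hp : 1 ≤ p)
    (hAd : A < d) (hA : 0 < A) (hr : 0 < r) (hrn : r ≤ n) (ha : 0 ≤ a) (hb : 0 ≤ b)
    (hbc : b ≤ c) :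
    (n ^ (d - 1))⁻¹ * (a ^ (q * (1 - 1 / p)) * b) ≤
      r ^ (-((d : ℝ) - 1) + A / 2 * (1 - 1 / p)) *
        ((c ^ p) ^ (1 / p) * (n ^ (-(A / 2)) * a ^ q) ^ (1 - 1 / p)) := by
  have hn : 0 < n := hr.trans_le hrn
  have hp0 : 0 < p := by linarith
  have hd2 : (2 : ℝ) ≤ d := by exact_mod_cast hd
  have hp1 : 1 - 1 / p ≤ 1 := by
    have : 0 < 1 / p := by positivity
    linarith
  have hc : 0 ≤ c := hb.trans hbc
  set e := -((d : ℝ) - 1) + A / 2 * (1 - 1 / p) with he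
  have he0 : e ≤ 0 := by
    have : A / 2 * (1 - 1 / p) ≤ A / 2 * 1 := by gcongr
    linarith
  have e1 : (n ^ (d - 1))⁻¹ ≤ r ^ e * n ^ (-(A / 2) * (1 - 1 / p)) := by
    calc (n ^ (d - 1))⁻¹ = n ^ e * n ^ (-(A / 2) * (1 - 1 / p)) := by
          rw [← Real.rpow_add hn, ← Real.rpow_natCast, ← Real.rpow_neg hn.le,
            Nat.cast_sub (by omega), he]
          congr 1
          push_cast; ring
      _ ≤ _ := by
          gcongr ?_ * _
          exact Real.rpow_le_rpow_of_nonpos hr hrn he0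
  rw [← Real.rpow_mul hc, mul_one_div_cancel hp0.ne', Real.rpow_one,
    Real.mul_rpow (by positivity) (by positivity), ← Real.rpow_mul hn.le, ← Real.rpow_mul ha]
  calc _ ≤ r ^ e * n ^ (-(A / 2) * (1 - 1 / p)) * (a ^ (q * (1 - 1 / p)) * c) := by gcongr
    _ = _ := by ring

lemma radial_pointwise_bound_gradient {d : ℕ} (hd : 2 ≤ d) {p q : ℝ} (hp : 1 ≤ p) (hq : 1 ≤ q) :
    ∃ C : ℝ, 0 < C ∧ ∀ A : ℝ, 0 < A → A < d → ∀ g : EuclideanSpace ℝ (Fin d) → ℝ,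
      (∀ x y, ‖x‖ = ‖y‖ → g x = g y) → ContDiff ℝ 1 g → HasCompactSupport g →
      ∀ x, x ≠ 0 → |g x| ^ (1 + q * (1 - 1 / p)) ≤
        C * (‖x‖ ^ (-((d : ℝ) - 1) + A / 2 * (1 - 1 / p)) *
          ((∫ y, ‖fderiv ℝ g y‖ ^ p) ^ (1 / p) *
            (∫ y, ‖y‖ ^ (-(A / 2)) * |g y| ^ q) ^ (1 - 1 / p))) := by
  have hp0 : 0 < p := by linarith
  have hp2 : 1 / p ≤ 1 := by rw [div_le_one hp0]; exact hp
  have hk1 : 1 ≤ 1 + q * (1 - 1 / p) := by nlinarith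
  have hω0 : 0 < volume.real (Metric.ball (0 : EuclideanSpace ℝ (Fin d)) 1) :=
    ENNReal.toReal_pos (Metric.measure_ball_pos volume _ one_pos).ne' measure_ball_lt_top.ne
  have hd0 : (0 : ℝ) < d := by positivity
  refine ⟨(1 + q * (1 - 1 / p)) /
    (d * volume.real (Metric.ball (0 : EuclideanSpace ℝ (Fin d)) 1)), by positivity, ?_⟩
  intro A hA hAd g hgr hg hgc x hx
  have hr0 : 0 < ‖x‖ := norm_pos_iff.2 hx
  obtain ⟨φ, hφ, hgφ, hder, R, hR⟩ := exists_radial_profile (by omega) hgr hg hgc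
  have h1 := abs_rpow_le_integral_of_eq_zero hφ hk1 (le_max_left ‖x‖ R) (hR _ (le_max_right _ _))
  rw [add_sub_cancel_left] at h1
  have h2 := integral_indicator_Ioc_norm (d := d) (by omega) hr0 (le_max_left ‖x‖ R)
    (fun t => |φ t| ^ (q * (1 - 1 / p)) * |deriv φ t|)
  have hm : Measurable fun t : ℝ => (t ^ (d - 1))⁻¹ *
      (|φ t| ^ (q * (1 - 1 / p)) * |deriv φ t|) := by
    have := measurable_deriv φ
    have := hφ.continuous.measurable
    fun_prop
  have h3 := integral_norm_le_of_le_rpow_mul (by positivity) hp2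
    (Real.rpow_nonneg hr0.le (-((d : ℝ) - 1) + A / 2 * (1 - 1 / p)))
    ((hm.indicator (measurableSet_Ioc (a := ‖x‖) (b := max ‖x‖ R))).comp
      (measurable_norm (α := EuclideanSpace ℝ (Fin d))))
    (fun y => Set.indicator_nonneg (fun t ht => by
      have : 0 < t := hr0.trans ht.1
      positivity) _)
    (integrable_norm_fderiv_rpow hp0 hg hgc) (fun y => by positivity)
    (integrable_norm_rpow_neg_mul (q := q) (b := A / 2) (by omega) hg.continuous hgc (by linarith)
      (by linarith)) (fun y => by positivity) (fun y => by
      by_cases hy : ‖y‖ ∈ Set.Ioc ‖x‖ (max ‖x‖ R)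
      · rw [Function.comp_apply, Set.indicator_of_mem hy, ← hgφ y]
        exact inv_pow_mul_rpow_mul_le hd hp hAd hA hr0 hy.1.le (abs_nonneg _) (abs_nonneg _)
          (hder y)
      · rw [Function.comp_apply, Set.indicator_of_notMem hy]
        positivity)
  simp only [Function.comp_apply] at h3
  rw [h2] at h3
  rw [hgφ x]
  refine h1.trans ?_
  rw [div_mul_eq_mul_div, le_div_iff₀ (by positivity), mul_assoc]
  refine mul_le_mul_of_nonneg_left ?_ (by linarith)
  rw [mul_comm]
  exact h3

lemma integral_abs_rpow_le_gradient {d : ℕ} (hd : 2 ≤ d) {p q : ℝ}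
    (hp : 1 ≤ p) (hq : 1 ≤ q) :
    ∃ D : ℝ, 0 < D ∧ ∀ A l : ℝ, 0 < A → A < d → 0 < l → l < 1 →
      l * (A + p * (2 * d - 2 - A)) = A →
      ∀ g : EuclideanSpace ℝ (Fin d) → ℝ, (∀ x y, ‖x‖ = ‖y‖ → g x = g y) →
      ContDiff ℝ 1 g → HasCompactSupport g →
      ∫ x, |g x| ^ (l * (p + p * q) + (1 - l) * q) ≤
        (D * ∫ x, ‖fderiv ℝ g x‖ ^ p) ^ l *
        (∫ x, ‖x‖ ^ (-(A / 2)) * |g x| ^ q) ^ (p * l + (1 - l)) := by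
  have hne : Nonempty (Fin d) := ⟨⟨0, by omega⟩⟩
  obtain ⟨C, hC, hrad⟩ := radial_pointwise_bound_gradient hd hp hq
  have hp0 : 0 < p := by linarith
  refine ⟨C ^ p, by positivity, ?_⟩
  intro A l hA hAd hl0 hl1 hl g hgr hg hgc
  have hc := hg.continuous
  have hr := hrad A hA hAd g hgr hg hgc
  have hWint := integrable_norm_rpow_neg_mul (by omega) hc hgc (q := q) (b := A / 2)
    (by linarith) (by linarith)
  have hWc := integral_const_mul (μ := volume) (f := fun x => ‖x‖ ^ (-(A / 2)) * |g x| ^ q)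
  have hJ0 : 0 ≤ ∫ y, ‖fderiv ℝ g y‖ ^ p := integral_nonneg fun y => by positivity
  have hW0 : 0 ≤ ∫ y, ‖y‖ ^ (-(A / 2)) * |g y| ^ q := integral_nonneg fun y => by positivity
  generalize (∫ y, ‖fderiv ℝ g y‖ ^ p) = J at *
  generalize (∫ y, ‖y‖ ^ (-(A / 2)) * |g y| ^ q) = W at *
  have hpp : (1 - 1 / p) * p = p - 1 := by field_simp
  have hp1 : 0 ≤ 1 - 1 / p := by
    rw [sub_nonneg, div_le_one hp0]; exact hp
  have e1 : l * (p + p * q) + (1 - l) * q = (1 + q * (1 - 1 / p)) * (p * l) + q := by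
    linear_combination (-q * l) * hpp
  have hk : 0 ≤ (1 + q * (1 - 1 / p)) * (p * l) := by positivity
  have hae : ∀ᵐ x : EuclideanSpace ℝ (Fin d), x ≠ 0 :=
    compl_mem_ae_iff.2 (measure_singleton (0 : EuclideanSpace ℝ (Fin d)))
  calc ∫ x, |g x| ^ (l * (p + p * q) + (1 - l) * q)
      ≤ ∫ x, (C ^ p * J * W ^ (p - 1)) ^ l * (‖x‖ ^ (-(A / 2)) * |g x| ^ q) := by
        refine integral_mono_of_nonneg (Filter.Eventually.of_forall fun x => by
          simp only [Pi.zero_apply]; positivity) (hWint.const_mul _) ?_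
        filter_upwards [hae] with x hx
        have hn : 0 < ‖x‖ := norm_pos_iff.2 hx
        have h := Real.rpow_le_rpow (by positivity) (hr x hx) (by positivity : 0 ≤ p * l)
        have e2 : (C * (‖x‖ ^ (-((d : ℝ) - 1) + A / 2 * (1 - 1 / p)) *
            (J ^ (1 / p) * W ^ (1 - 1 / p)))) ^ (p * l) =
            (C ^ p * J * W ^ (p - 1)) ^ l * ‖x‖ ^ (-(A / 2)) := by
          have e3 : ‖x‖ ^ (-(A / 2)) =
              (‖x‖ ^ ((-((d : ℝ) - 1) + A / 2 * (1 - 1 / p)) * p)) ^ l := by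
            rw [← Real.rpow_mul hn.le]
            congr 1
            linear_combination (1 / 2) * hl - (A / 2 * l) * hpp
          rw [e3, ← Real.mul_rpow (by positivity) (by positivity),
            Real.rpow_mul (by positivity) p l]
          congr 1
          rw [Real.mul_rpow (by positivity) (by positivity),
            Real.mul_rpow (by positivity) (by positivity),
            Real.mul_rpow (by positivity) (by positivity), ← Real.rpow_mul hn.le,
            ← Real.rpow_mul hJ0, ← Real.rpow_mul hW0, hpp, one_div_mul_cancel hp0.ne',
            Real.rpow_one]
          ring
        rw [← Real.rpow_mul (abs_nonneg _), e2] at h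
        rw [e1, Real.rpow_add_of_nonneg (abs_nonneg _) hk (by linarith),
          ← mul_assoc _ (‖x‖ ^ (-(A / 2)))]
        exact mul_le_mul_of_nonneg_right h (by positivity)
    _ = (C ^ p * J * W ^ (p - 1)) ^ l * W := hWc _
    _ = _ := by
        have hpl : 0 ≤ (p - 1) * l := mul_nonneg (by linarith) hl0.le
        rw [Real.mul_rpow (by positivity) (by positivity), ← Real.rpow_mul hW0, mul_assoc,
          ← Real.rpow_add_one' hW0 (by linarith)]
        congr 2
        ring

lemma exists_integral_abs_rpow_le_sobolevSemi {d : ℕ} (hd : 2 ≤ d) {s p q : ℝ} (hs0 : 0 < s)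
    (hs1 : s ≤ 1) (hp : 1 ≤ p) (hq : 1 ≤ q) (hsp : s * p < d) :
    ∃ D : ℝ, 0 < D ∧ ∀ A l : ℝ, 0 < A → A < d → 0 < l → l < 1 →
      l * (A + s * p * (2 * d - 2 - A)) = A →
      ∀ g : EuclideanSpace ℝ (Fin d) → ℝ, (∀ x y, ‖x‖ = ‖y‖ → g x = g y) →
      ContDiff ℝ 1 g → HasCompactSupport g →
      ∃ J : ℝ, 0 ≤ J ∧ sobolevSemi d s p g = J ^ (1 / p) ∧
      ∫ x, |g x| ^ (l * (p + s * p * q) + (1 - l) * q) ≤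
        (D * J) ^ l * (∫ x, ‖x‖ ^ (-(A / 2)) * |g x| ^ q) ^ (s * p * l + (1 - l)) := by
  rcases hs1.eq_or_lt with rfl | hs1
  · obtain ⟨D, hD, h⟩ := integral_abs_rpow_le_gradient hd hp hq
    simp only [one_mul]
    exact ⟨D, hD, fun A l h1 h2 h3 h4 h5 g h6 h7 h8 =>
      ⟨_, integral_nonneg fun x => by positivity, by rw [sobolevSemi, if_pos rfl],
        h A l h1 h2 h3 h4 h5 g h6 h7 h8⟩⟩
  · obtain ⟨D, hD, h⟩ := integral_abs_rpow_le_gagliardo hd hs0 hs1 hp hq hsp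
    exact ⟨D, hD, fun A l h1 h2 h3 h4 h5 g h6 h7 h8 =>
      ⟨_, integral_nonneg fun x => integral_nonneg fun y => by positivity,
        by rw [sobolevSemi, if_neg hs1.ne, if_neg hs0.ne'], h A l h1 h2 h3 h4 h5 g h6 h7 h8⟩⟩

lemma gamma_eq {d s p q A l : ℝ} (hden : 0 < A + s * p * (2 * d - 2 - A))
    (hl : l * (A + s * p * (2 * d - 2 - A)) = A) :
    q + (q * (s * p - 1) + p) * A / (s * p * (2 * d - 2 - A) + A) =
      l * (p + s * p * q) + (1 - l) * q := by
  rw [add_comm (s * p * _) A, mul_div_assoc, ← eq_div_iff hden.ne' |>.2 hl]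
  ring

lemma interpolation_exponent_eq {d s p q A l : ℝ}
    (hl : l * (A + s * p * (2 * d - 2 - A)) = A)
    (hγ : 0 < l * (p + s * p * q) + (1 - l) * q)
    (hD : p * (2 * d - A) - 2 * q * (d - s * p) ≠ 0) :
    p * ((l * (p + s * p * q) + (1 - l) * q) * (2 * d - A) - 2 * q * d) /
      ((l * (p + s * p * q) + (1 - l) * q) * (p * (2 * d - A) - 2 * q * (d - s * p))) =
      p * l / (l * (p + s * p * q) + (1 - l) * q) := by
  rw [div_eq_div_iff (mul_ne_zero hγ.ne' hD) hγ.ne']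
  linear_combination p * (l * (p + s * p * q) + (1 - l) * q) * q * hl

lemma rpow_one_div_le_of_le_mul {γ p q t l D J W X a : ℝ} (hγ : 1 ≤ γ) (hp : 0 < p) (hq : 0 < q)
    (hl0 : 0 ≤ l) (hl1 : l ≤ 1) (hD : 0 < D) (hJ : 0 ≤ J) (hW : 0 ≤ W) (hX : 0 ≤ X)
    (h : X ≤ (D * J) ^ l * W ^ t) (ha : a = p * l / γ) (hat : q * t = (1 - a) * γ) :
    X ^ (1 / γ) ≤ max D 1 * (J ^ (1 / p)) ^ a * (W ^ (1 / q)) ^ (1 - a) := by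
  have hγ0 : 0 < γ := by linarith
  have hlγ : l * (1 / γ) ≤ 1 := by
    rw [mul_one_div, div_le_one hγ0]; linarith
  calc X ^ (1 / γ) ≤ ((D * J) ^ l * W ^ t) ^ (1 / γ) := by gcongr
    _ = D ^ (l * (1 / γ)) * (J ^ (1 / p)) ^ a * (W ^ (1 / q)) ^ (1 - a) := by
        rw [Real.mul_rpow (by positivity) (by positivity), ← Real.rpow_mul (by positivity),
          Real.mul_rpow hD.le hJ, ← Real.rpow_mul hW, ← Real.rpow_mul hJ, ← Real.rpow_mul hW,
          show l * (1 / γ) = 1 / p * a by rw [ha]; field_simp,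
          show t * (1 / γ) = 1 / q * (1 - a) by field_simp; linarith]
    _ ≤ _ := by
        gcongr
        calc D ^ (l * (1 / γ)) ≤ max D 1 ^ (l * (1 / γ)) := by
              gcongr; exact le_max_left _ _
          _ ≤ max D 1 ^ (1 : ℝ) := Real.rpow_le_rpow_of_exponent_le (le_max_right _ _) hlγ
          _ = _ := Real.rpow_one _

theorem stmt6 (d : ℕ) (hd : 2 ≤ d) (s p q α : ℝ)
    (hs0 : 0 < s) (hs1 : s ≤ 1) (hp1 : 1 ≤ p) (hq1 : 1 ≤ q)
    (hα0 : 0 < α) (hαd : α < d)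
    (hD : p * ((d : ℝ) + α) - 2 * q * ((d : ℝ) - s * p) < 0) :
    ∃ C > 0, ∃ ε₀ > 0, ∀ ε : ℝ, 0 < ε → ε < ε₀ →
      p * ((d : ℝ) + α + 2 * ε) - 2 * q * ((d : ℝ) - s * p) < 0 →
      ∀ γε aε : ℝ,
      γε = q + (q * (s * p - 1) + p) * ((d : ℝ) - α - 2 * ε) /
        (s * p * ((d : ℝ) + α + 2 * ε - 2) + ((d : ℝ) - α - 2 * ε)) →
      aε = p * (γε * ((d : ℝ) + α + 2 * ε) - 2 * q * d) /
        (γε * (p * ((d : ℝ) + α + 2 * ε) - 2 * q * ((d : ℝ) - s * p))) →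
      ∀ g : EuclideanSpace ℝ (Fin d) → ℝ,
        (∀ x y : EuclideanSpace ℝ (Fin d), ‖x‖ = ‖y‖ → g x = g y) →
        ContDiff ℝ 1 g → HasCompactSupport g →
        (∫ x, |g x| ^ γε) ^ (1 / γε) ≤
          C * sobolevSemi d s p g ^ aε *
            ((∫ x, (‖x‖ ^ (-(((d : ℝ) - α) / (2 * q) - ε / q)) * |g x|) ^ q) ^ (1 / q))
              ^ (1 - aε) := by
  have hd2 : (2 : ℝ) ≤ d := by exact_mod_cast hd
  have hq0 : 0 < q := by linarith
  have hp0 : 0 < p := by linarith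
  have hspp : 0 < s * p := by positivity
  have hsp : s * p < d := by
    by_contra! hcon
    have h1 : 0 < p * ((d : ℝ) + α) := by positivity
    nlinarith
  obtain ⟨D, hD0, hcore⟩ := exists_integral_abs_rpow_le_sobolevSemi hd hs0 hs1 hp1 hq1 hsp
  refine ⟨max D 1, by positivity, (d - α) / 2, by linarith, ?_⟩
  intro ε hε hε0 hDε γ a hγ ha g hgr hg hgc
  obtain ⟨A, hAdef⟩ : ∃ A : ℝ, A = d - α - 2 * ε := ⟨_, rfl⟩
  have hA0 : 0 < A := by linarith
  have hAd : A < d := by linarith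
  have hκ : 0 < 2 * (d : ℝ) - 2 - A := by linarith
  have hden : 0 < A + s * p * (2 * d - 2 - A) := by positivity
  obtain ⟨l, hl⟩ : ∃ l : ℝ, l * (A + s * p * (2 * d - 2 - A)) = A :=
    ⟨A / (A + s * p * (2 * d - 2 - A)), div_mul_cancel₀ _ hden.ne'⟩
  have hl0 : 0 < l := pos_of_mul_pos_left (hl.symm ▸ hA0) hden.le
  have hl1 : l < 1 := by
    by_contra! hcon
    have : 0 < s * p * (2 * d - 2 - A) := by positivity
    nlinarith
  have h1l : 0 < 1 - l := by linarith
  have hγ' : γ = l * (p + s * p * q) + (1 - l) * q := by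
    rw [hγ, ← gamma_eq hden hl, hAdef]
    ring_nf
  have hγ1 : 1 ≤ γ := by
    have : 0 < l * (s * p * q) := by positivity
    rw [hγ']
    nlinarith
  have ha' : a = p * l / γ := by
    have h := interpolation_exponent_eq (q := q) hl (by rw [← hγ']; linarith)
      (show p * (2 * d - A) - 2 * q * (d - s * p) ≠ 0 by rw [hAdef]; linarith)
    rw [← hγ'] at h
    rw [ha, ← h, hAdef]
    ring_nf
  obtain ⟨J, hJ0, hJ, hle⟩ := hcore A l hA0 hAd hl0 hl1 hl g hgr hg hgc
  have hW : ∀ x : EuclideanSpace ℝ (Fin d),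
      (‖x‖ ^ (-(((d : ℝ) - α) / (2 * q) - ε / q)) * |g x|) ^ q = ‖x‖ ^ (-(A / 2)) * |g x| ^ q := by
    intro x
    rw [Real.mul_rpow (by positivity) (by positivity), ← Real.rpow_mul (norm_nonneg _)]
    congr 2
    rw [hAdef]
    field_simp
  simp only [hW]
  rw [hJ]
  refine rpow_one_div_le_of_le_mul hγ1 hp0 hq0 hl0.le hl1.le hD0 hJ0
    (integral_nonneg fun x => by positivity) (integral_nonneg fun x => by positivity)
    (hγ' ▸ hle) ha' ?_
  have : a * γ = p * l := by rw [ha']; field_simp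
  rw [sub_mul, this, hγ']
  ring
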